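/- arXiv:1503.02716 — 5 statements merged into one kernel-verified Lean document; each statement's English description precedes it below -/
import Mathlib

section
/- Let $d \ge 3$, let $a \ge -\left(\tfrac{d-2}{2}\right)^2$ be real, and set $\sigma = \tfrac{d-2}{2} - \tfrac12\sqrt{(d-2)^2+4a}$. Then for every $\phi \in C_c^\infty(\mathbb{R}^d\setminus\{0\})$ (complex-valued) one has the identity $\int_{\mathbb{R}^d} |\nabla\phi(x)|^2 + \tfrac{a}{|x|^2}|\phi(x)|^2\,dx = \int_{\mathbb{R}^d} \bigl|\nabla\phi(x) + \sigma\tfrac{x}{|x|^2}\phi(x)\bigr|^2\,dx$; in particular the left-hand side is nonnegative. -/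
open MeasureTheory

/-!
Write `r = ‖x‖` and `n` for the dimension. Since `∑ᵢ xᵢ ∂ᵢφ = Dφ(x)x`, expanding the square gives
pointwise `∑ᵢ |∂ᵢφ + σ xᵢ φ / r²|² = ∑ᵢ |∂ᵢφ|² + σ D(|φ|²)(x)x / r² + σ² |φ|² / r²`. Integrating
`D(|φ|² / r²)(x)x` by parts turns the middle term into `-σ (n - 2) ∫ |φ|² / r²`, and
`σ² - σ (n - 2)` is `a`.
-/

section EulerOperator

variable {E F : Type*} [NormedAddCommGroup E] [NormedSpace ℝ E] [NormedAddCommGroup F]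
  [NormedSpace ℝ F] {u : E → F}

lemma tsupport_fderiv_apply_self_subset : tsupport (fun x => fderiv ℝ u x x) ⊆ tsupport u :=
  closure_minimal (fun x hx => by
    contrapose! hx
    simp [fderiv_of_notMem_tsupport ℝ hx]) isClosed_closure

lemma continuous_fderiv_apply_self (hu : ContDiff ℝ 1 u) :
    Continuous fun x => fderiv ℝ u x x :=
  (hu.continuous_fderiv one_ne_zero).clm_apply continuous_id

variable [MeasurableSpace E]

lemma integrable_clm_smul_fderiv_apply [OpensMeasurableSpace E] (μ : Measure E)
    [IsFiniteMeasureOnCompacts μ] (hu : ContDiff ℝ 1 u) (huc : HasCompactSupport u)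
    (ℓ : E →L[ℝ] ℝ) (v : E) : Integrable (fun x => ℓ x • fderiv ℝ u x v) μ := by
  refine Continuous.integrable_of_hasCompactSupport ?_ (huc.fderiv_apply ℝ v).smul_left
  exact ℓ.continuous.smul ((hu.continuous_fderiv one_ne_zero).clm_apply continuous_const)

variable [FiniteDimensional ℝ E] [BorelSpace E] (μ : Measure E) [μ.IsAddHaarMeasure]

lemma integral_clm_smul_fderiv_apply (hu : ContDiff ℝ 1 u) (huc : HasCompactSupport u)
    (ℓ : E →L[ℝ] ℝ) (v : E) :
    ∫ x, ℓ x • fderiv ℝ u x v ∂μ = -(ℓ v • ∫ x, u x ∂μ) := by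
  have hparts := integral_smul_fderiv_eq_neg_fderiv_smul_of_integrable (μ := μ) (f := ℓ) (g := u)
    (v := v)
    (by simpa using (hu.continuous.integrable_of_hasCompactSupport huc).fun_smul (ℓ v))
    (integrable_clm_smul_fderiv_apply μ hu huc ℓ v)
    ((ℓ.continuous.smul hu.continuous).integrable_of_hasCompactSupport huc.smul_left)
    (fun _ _ => ℓ.differentiableAt) (fun x _ => hu.differentiable one_ne_zero x)
  simpa [integral_smul] using hparts

theorem integral_fderiv_apply_self (hu : ContDiff ℝ 1 u) (huc : HasCompactSupport u) :
    ∫ x, fderiv ℝ u x x ∂μ = -((Module.finrank ℝ E : ℝ) • ∫ x, u x ∂μ) := by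
  let b := Module.finBasis ℝ E
  let ℓ i : E →L[ℝ] ℝ := (b.coord i).toContinuousLinearMap
  have hexpand x : fderiv ℝ u x x = ∑ i, ℓ i x • fderiv ℝ u x (b i) := by
    conv_lhs => rw [← b.sum_repr x, map_sum, b.sum_repr x]
    simp [ℓ]
  have hdiag i : ℓ i (b i) = 1 := by simp [ℓ]
  simp_rw [hexpand]
  rw [integral_finsetSum _ fun i _ => integrable_clm_smul_fderiv_apply μ hu huc (ℓ i) (b i)]
  simp [integral_clm_smul_fderiv_apply μ hu huc, hdiag, ← Nat.cast_smul_eq_nsmul ℝ]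

end EulerOperator

section Hardy

variable {E : Type*} [NormedAddCommGroup E] {f : E → ℝ}

lemma hasCompactSupport_div_norm_sq (hfc : HasCompactSupport f) :
    HasCompactSupport fun x => f x / ‖x‖ ^ 2 :=
  hfc.mono fun x hx hfx => hx (by simp [hfx])

variable [InnerProductSpace ℝ E]

lemma contDiff_div_norm_sq {n : WithTop ℕ∞} (hf : ContDiff ℝ n f) (hf0 : (0 : E) ∉ tsupport f) :
    ContDiff ℝ n fun x => f x / ‖x‖ ^ 2 := by
  refine contDiff_iff_contDiffAt.2 fun x => ?_
  by_cases hx : x ∈ tsupport f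
  · have hx0 : x ≠ 0 := fun h => hf0 (h ▸ hx)
    exact hf.contDiffAt.div (contDiff_norm_sq ℝ).contDiffAt (by simpa using hx0)
  · refine contDiffAt_const (c := (0 : ℝ)) |>.congr_of_eventuallyEq ?_
    filter_upwards [notMem_tsupport_iff_eventuallyEq.1 hx] with y hy
    simp [hy]

-- At `x = 0` both sides are `0`: the left by linearity, the right because `t / 0 = 0`.
lemma fderiv_div_norm_sq_apply_self {x : E} (hf : DifferentiableAt ℝ f x) :
    fderiv ℝ (fun y => f y / ‖y‖ ^ 2) x x = fderiv ℝ f x x / ‖x‖ ^ 2 - 2 * (f x / ‖x‖ ^ 2) := by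
  obtain rfl | hx := eq_or_ne x 0
  · simp
  have hx2 : ‖x‖ ^ 2 ≠ 0 := by simpa using hx
  have hinv := (hasDerivAt_inv hx2).comp_hasFDerivAt x (hasStrictFDerivAt_norm_sq x).hasFDerivAt
  have hquot : fderiv ℝ (fun y => f y * (‖y‖ ^ 2)⁻¹) x x =
      f x * (-((‖x‖ ^ 2) ^ 2)⁻¹ * (2 * ‖x‖ ^ 2)) + (‖x‖ ^ 2)⁻¹ * fderiv ℝ f x x := by
    refine (congrArg (· x) (hf.hasFDerivAt.mul hinv).fderiv).trans ?_
    simp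
  simp only [div_eq_mul_inv, hquot]
  field_simp
  ring

variable [MeasurableSpace E]

section Integrable

variable [OpensMeasurableSpace E] (μ : Measure E) [IsFiniteMeasureOnCompacts μ]

lemma integrable_div_norm_sq (hf : Continuous f) (hfc : HasCompactSupport f)
    (hf0 : (0 : E) ∉ tsupport f) : Integrable (fun x => f x / ‖x‖ ^ 2) μ :=
  (contDiff_div_norm_sq (contDiff_zero.2 hf) hf0).continuous.integrable_of_hasCompactSupport
    (hasCompactSupport_div_norm_sq hfc)

lemma integrable_fderiv_apply_self_div_norm_sq (hf : ContDiff ℝ 1 f) (hfc : HasCompactSupport f)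
    (hf0 : (0 : E) ∉ tsupport f) : Integrable (fun x => fderiv ℝ f x x / ‖x‖ ^ 2) μ :=
  integrable_div_norm_sq μ (continuous_fderiv_apply_self hf)
    (hfc.of_isClosed_subset isClosed_closure tsupport_fderiv_apply_self_subset)
    fun h => hf0 (tsupport_fderiv_apply_self_subset h)

end Integrable

theorem integral_fderiv_apply_self_div_norm_sq [FiniteDimensional ℝ E] [BorelSpace E]
    (μ : Measure E) [μ.IsAddHaarMeasure] (hf : ContDiff ℝ 1 f) (hfc : HasCompactSupport f)
    (hf0 : (0 : E) ∉ tsupport f) :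
    ∫ x, fderiv ℝ f x x / ‖x‖ ^ 2 ∂μ =
      -((Module.finrank ℝ E - 2) * ∫ x, f x / ‖x‖ ^ 2 ∂μ) := by
  have hparts := integral_fderiv_apply_self μ (contDiff_div_norm_sq hf hf0)
    (hasCompactSupport_div_norm_sq hfc)
  simp_rw [fderiv_div_norm_sq_apply_self (hf.differentiable one_ne_zero _)] at hparts
  rw [integral_sub (integrable_fderiv_apply_self_div_norm_sq μ hf hfc hf0)
    ((integrable_div_norm_sq μ hf.continuous hfc hf0).const_mul 2), integral_const_mul,
    smul_eq_mul] at hparts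
  linarith

end Hardy

section Factorization

open scoped RealInnerProductSpace

variable {ι E F : Type*} [Fintype ι] [NormedAddCommGroup E] [InnerProductSpace ℝ E]
  [NormedAddCommGroup F] [InnerProductSpace ℝ F] (b : OrthonormalBasis ι ℝ E) {φ : E → F}

lemma sum_norm_sq_map_add_inner_smul (L : E →ₗ[ℝ] F) (c : ℝ) (x : E) (v : F) :
    ∑ i, ‖L (b i) + (c * ⟪b i, x⟫) • v‖ ^ 2 =
      ∑ i, ‖L (b i)‖ ^ 2 + 2 * c * ⟪L x, v⟫ + c ^ 2 * ‖x‖ ^ 2 * ‖v‖ ^ 2 := by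
  have hLx : ⟪L x, v⟫ = ∑ i, ⟪b i, x⟫ * ⟪L (b i), v⟫ := by
    conv_lhs => rw [← b.sum_repr' x]
    simp only [map_sum, map_smul, sum_inner, real_inner_smul_left]
  rw [hLx, ← b.sum_sq_inner_right x, Finset.mul_sum, Finset.mul_sum, Finset.sum_mul,
    ← Finset.sum_add_distrib, ← Finset.sum_add_distrib]
  refine Finset.sum_congr rfl fun i _ => ?_
  rw [norm_add_sq_real, norm_smul, real_inner_smul_right, mul_pow, Real.norm_eq_abs, sq_abs]
  ring

lemma sum_norm_sq_fderiv_add_radial (σ : ℝ) {x : E} (hφ : DifferentiableAt ℝ φ x) :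
    ∑ i, ‖fderiv ℝ φ x (b i) + (σ * ⟪b i, x⟫ / ‖x‖ ^ 2) • φ x‖ ^ 2 =
      ∑ i, ‖fderiv ℝ φ x (b i)‖ ^ 2
        + σ * (fderiv ℝ (fun y => ‖φ y‖ ^ 2) x x / ‖x‖ ^ 2)
        + σ ^ 2 * (‖φ x‖ ^ 2 / ‖x‖ ^ 2) := by
  have hfderiv : fderiv ℝ (fun y => ‖φ y‖ ^ 2) x x = 2 * ⟪fderiv ℝ φ x x, φ x⟫ := by
    simp [hφ.hasFDerivAt.norm_sq.fderiv, real_inner_comm]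
  have hexpand := sum_norm_sq_map_add_inner_smul b (fderiv ℝ φ x) (σ / ‖x‖ ^ 2) x (φ x)
  simp only [ContinuousLinearMap.coe_coe, div_mul_eq_mul_div] at hexpand
  rw [hexpand, hfderiv]
  obtain rfl | hx := eq_or_ne x 0
  · simp
  have hx' : ‖x‖ ≠ 0 := norm_ne_zero_iff.2 hx
  field_simp

variable [MeasurableSpace E]

lemma integrable_sum_norm_sq_fderiv [OpensMeasurableSpace E] (μ : Measure E)
    [IsFiniteMeasureOnCompacts μ] (hφ : ContDiff ℝ 1 φ) (hφc : HasCompactSupport φ) :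
    Integrable (fun x => ∑ i, ‖fderiv ℝ φ x (b i)‖ ^ 2) μ := by
  refine integrable_finsetSum _ fun i _ => Continuous.integrable_of_hasCompactSupport ?_ ?_
  · exact ((hφ.continuous_fderiv one_ne_zero).clm_apply continuous_const).norm.pow 2
  · exact (hφc.fderiv_apply ℝ (b i)).comp_left (g := fun v => ‖v‖ ^ 2) (by simp)

theorem factorization_identity_general [BorelSpace E] (μ : Measure E) [μ.IsAddHaarMeasure]
    {a σ : ℝ} (ha : a = -σ * (Module.finrank ℝ E - 2 - σ))
    (hφ : ContDiff ℝ 1 φ) (hφc : HasCompactSupport φ) (hφ0 : (0 : E) ∉ tsupport φ) :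
    (∫ x, (∑ i, ‖fderiv ℝ φ x (b i)‖ ^ 2 + a / ‖x‖ ^ 2 * ‖φ x‖ ^ 2) ∂μ =
      ∫ x, ∑ i, ‖fderiv ℝ φ x (b i) + (σ * ⟪b i, x⟫ / ‖x‖ ^ 2) • φ x‖ ^ 2 ∂μ)
    ∧ 0 ≤ ∫ x, (∑ i, ‖fderiv ℝ φ x (b i)‖ ^ 2 + a / ‖x‖ ^ 2 * ‖φ x‖ ^ 2) ∂μ := by
  have : FiniteDimensional ℝ E := b.toBasis.finiteDimensional_of_finite
  have hf : ContDiff ℝ 1 fun x => ‖φ x‖ ^ 2 := hφ.norm_sq ℝ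
  have hfc : HasCompactSupport fun x => ‖φ x‖ ^ 2 :=
    hφc.comp_left (g := fun v => ‖v‖ ^ 2) (by simp)
  have hf0 : (0 : E) ∉ tsupport fun x => ‖φ x‖ ^ 2 := fun h =>
    hφ0 (tsupport_comp_subset (g := fun v : F => ‖v‖ ^ 2) (by simp) φ h)
  have hgrad := integrable_sum_norm_sq_fderiv b μ hφ hφc
  have hradial := (integrable_fderiv_apply_self_div_norm_sq μ hf hfc hf0).const_mul σ
  have hpot := integrable_div_norm_sq μ hf.continuous hfc hf0
  have heq : ∫ x, (∑ i, ‖fderiv ℝ φ x (b i)‖ ^ 2 + a / ‖x‖ ^ 2 * ‖φ x‖ ^ 2) ∂μ =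
      ∫ x, ∑ i, ‖fderiv ℝ φ x (b i) + (σ * ⟪b i, x⟫ / ‖x‖ ^ 2) • φ x‖ ^ 2 ∂μ := by
    simp_rw [sum_norm_sq_fderiv_add_radial b σ (hφ.differentiable one_ne_zero _),
      div_mul_eq_mul_div, mul_div_assoc]
    rw [integral_add hgrad (hpot.const_mul a),
      integral_add (hgrad.fun_add hradial) (hpot.const_mul (σ ^ 2)),
      integral_add hgrad hradial]
    simp_rw [integral_const_mul]
    rw [integral_fderiv_apply_self_div_norm_sq μ hf hfc hf0, ha]
    ring
  refine ⟨heq, heq ▸ integral_nonneg fun x => ?_⟩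
  positivity

end Factorization

lemma eq_neg_mul_sub_of_eq_half_sub_sqrt {s a σ : ℝ} (ha : -(s / 2) ^ 2 ≤ a)
    (hσ : σ = s / 2 - √(s ^ 2 + 4 * a) / 2) : a = -σ * (s - σ) := by
  have hsqrt : √(s ^ 2 + 4 * a) ^ 2 = s ^ 2 + 4 * a := Real.sq_sqrt (by linarith)
  rw [hσ]
  linear_combination -hsqrt / 4

/-- For `d ≥ 3`, `a ≥ -((d-2)/2)²`, `σ = (d-2)/2 - √((d-2)²+4a)/2`, and every
`φ ∈ C_c^∞(ℝ^d \ {0}; ℂ)`, one has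
`∫ |∇φ|² + a|φ|²/|x|² dx = ∫ |∇φ + σ x φ /|x|²|² dx`, and in particular the
left-hand side is nonnegative. -/
theorem factorization_identity (d : ℕ) (hd : 3 ≤ d) (a : ℝ)
    (ha : -(((d : ℝ) - 2) / 2) ^ 2 ≤ a) (σ : ℝ)
    (hσ : σ = ((d : ℝ) - 2) / 2 - Real.sqrt (((d : ℝ) - 2) ^ 2 + 4 * a) / 2)
    (φ : EuclideanSpace ℝ (Fin d) → ℂ)
    (hφ : ContDiff ℝ (⊤ : ℕ∞) φ) (hφc : HasCompactSupport φ)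
    (hφ0 : (0 : EuclideanSpace ℝ (Fin d)) ∉ tsupport φ) :
    (∫ x, ((∑ i : Fin d, ‖fderiv ℝ φ x (EuclideanSpace.single i 1)‖ ^ 2)
        + (a / ‖x‖ ^ 2) * ‖φ x‖ ^ 2) =
      ∫ x, ∑ i : Fin d,
        ‖fderiv ℝ φ x (EuclideanSpace.single i 1)
          + ((σ * x i / ‖x‖ ^ 2 : ℝ) : ℂ) * φ x‖ ^ 2)
    ∧ 0 ≤ ∫ x, ((∑ i : Fin d, ‖fderiv ℝ φ x (EuclideanSpace.single i 1)‖ ^ 2)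
        + (a / ‖x‖ ^ 2) * ‖φ x‖ ^ 2) := by
  simpa [EuclideanSpace.inner_single_left] using factorization_identity_general
    (EuclideanSpace.basisFun (Fin d) ℝ) volume
    (by simpa using eq_neg_mul_sub_of_eq_half_sub_sqrt ha hσ) (hφ.of_le (by simp)) hφc hφ0
end

section
/- Let $d \ge 3$, let $\sigma \le \tfrac{d-2}{2}$ be real, let $0 < s < d$ with $d - s - 2\sigma > 0$, and let $c > 0$. Then there exist constants $0 < C_1 \le C_2$ depending only on $d, s, \sigma, c$ such that for all $x, y \in \mathbb{R}^d \setminus \{0\}$ with $0 < |x| \le |y|$ and $x \ne y$: $C_1 \le \dfrac{\int_0^\infty \tau^{\frac{s-d}{2}} e^{-c|x-y|^2/\tau} \left(\max\left(\tfrac{\sqrt{\tau}}{|x|},1\right)\right)^{\sigma} \left(\max\left(\tfrac{\sqrt{\tau}}{|y|},1\right)\right)^{\sigma} \tfrac{d\tau}{\tau}}{|x-y|^{s-d}\left(\min\left(\tfrac{|x|}{|x-y|},1\right)\right)^{-\sigma}} \le C_2$. -/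
open MeasureTheory

/-!
Rescaling time by `‖x - y‖ ^ 2` and absorbing the factor `(min (‖x‖ / ‖x - y‖) 1) ^ σ` turns the
ratio into `∫ t ^ (α / 2) * exp (-c / t) * w t ^ σ dt / t` with `α = s - d`. Since
`‖x - y‖ ≤ 2 * ‖y‖`, the weight `w` lies between `min √t 1` and `2 * max t 1` whatever `x` and `y`
are, so `w ^ σ` lies between the `σ`-th powers of these two envelopes, in an order that depends on
the sign of `σ`. Both envelopes give convergent integrals: the exponential handles `t → 0`, and
`α < 0`, `α + 2 * σ < 0` handle `t → ∞`.
-/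

section Envelope

variable {Ω : Type*} [MeasurableSpace Ω] {μ : Measure Ω} {f g h : Ω → ℝ}

lemma integrable_of_ae_mem_uIcc (hf : Integrable f μ) (hg : Integrable g μ)
    (hh : AEStronglyMeasurable h μ) (hmem : ∀ᵐ t ∂μ, h t ∈ Set.uIcc (f t) (g t)) :
    Integrable h μ :=
  integrable_of_le_of_le hh (hmem.mono fun _ ht ↦ ht.1) (hmem.mono fun _ ht ↦ ht.2)
    (hf.inf hg) (hf.sup hg)

lemma integral_mem_Icc_of_ae_mem_uIcc (hf : Integrable f μ) (hg : Integrable g μ)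
    (hh : AEStronglyMeasurable h μ) (hmem : ∀ᵐ t ∂μ, h t ∈ Set.uIcc (f t) (g t)) :
    ∫ t, h t ∂μ ∈ Set.Icc (∫ t, min (f t) (g t) ∂μ) (∫ t, max (f t) (g t) ∂μ) := by
  have hint : Integrable h μ := integrable_of_ae_mem_uIcc hf hg hh hmem
  exact ⟨integral_mono_ae (hf.inf hg) hint (hmem.mono fun _ ht ↦ ht.1),
    integral_mono_ae hint (hf.sup hg) (hmem.mono fun _ ht ↦ ht.2)⟩

lemma setIntegral_pos_of_forall_pos {S : Set Ω} (hS : MeasurableSet S) (hμS : 0 < μ S)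
    (hf : IntegrableOn f S μ) (hpos : ∀ t ∈ S, 0 < f t) : 0 < ∫ t in S, f t ∂μ := by
  have hnonneg : 0 ≤ᵐ[μ.restrict S] f :=
    ae_restrict_of_forall_mem hS fun t ht ↦ (hpos t ht).le
  have hsupport : S ⊆ Function.support f := fun t ht ↦ (hpos t ht).ne'
  rwa [setIntegral_pos_iff_support_of_nonneg_ae hnonneg hf, Set.inter_eq_right.mpr hsupport]

end Envelope

lemma rpow_mem_uIcc {l u w : ℝ} (σ : ℝ) (hl : 0 < l) (hw : w ∈ Set.Icc l u) :
    w ^ σ ∈ Set.uIcc (l ^ σ) (u ^ σ) := by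
  have hw0 : 0 < w := hl.trans_le hw.1
  rcases le_total 0 σ with hσ | hσ
  · exact Set.Icc_subset_uIcc
      ⟨Real.rpow_le_rpow hl.le hw.1 hσ, Real.rpow_le_rpow hw0.le hw.2 hσ⟩
  · exact Set.Icc_subset_uIcc'
      ⟨Real.rpow_le_rpow_of_nonpos hw0 hw.2 hσ, Real.rpow_le_rpow_of_nonpos hl hw.1 hσ⟩

lemma mul_mem_uIcc {k p q z : ℝ} (hk : 0 ≤ k) (hz : z ∈ Set.uIcc p q) :
    k * z ∈ Set.uIcc (k * p) (k * q) :=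
  (monotone_mul_left_of_nonneg hk).mapsTo_uIcc hz

/-- The Gaussian factor of the heat kernel at unit distance, times `t ^ q` and the density `1 / t`
of the scale-invariant measure `dt / t`. -/
noncomputable def heatProfile (q c t : ℝ) : ℝ :=
  t ^ q * Real.exp (-c / t) / t

section HeatProfile

variable {q c σ t : ℝ}

lemma heatProfile_pos (ht : 0 < t) : 0 < heatProfile q c t := by
  unfold heatProfile
  positivity

@[fun_prop]
lemma measurable_heatProfile : Measurable (heatProfile q c) := by
  unfold heatProfile
  fun_prop

lemma heatProfile_mul_rpow (β : ℝ) (ht : 0 < t) :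
    heatProfile q c t * t ^ β = heatProfile (q + β) c t := by
  simp only [heatProfile, Real.rpow_add ht]
  ring

lemma integrableOn_heatProfile (hq : q < 0) (hc : 0 < c) :
    IntegrableOn (heatProfile q c) (Set.Ioi 0) := by
  -- The substitution `t = u⁻¹` turns this into a Gamma integral.
  have hGamma : IntegrableOn (fun u : ℝ ↦ u ^ (-q - 1) * Real.exp (-c * u ^ (1 : ℝ)))
      (Set.Ioi 0) :=
    integrableOn_rpow_mul_exp_neg_mul_rpow (by linarith) one_pos hc
  rw [← integrableOn_Ioi_comp_rpow_iff' _ (p := -1) (by norm_num)] at hGamma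
  refine hGamma.congr_fun (fun t (ht : 0 < t) ↦ ?_) measurableSet_Ioi
  have hexp : (-1 - 1 + -1 * (-q - 1) : ℝ) = q - 1 := by ring
  simp only [smul_eq_mul, Real.rpow_one, heatProfile]
  rw [← Real.rpow_mul ht.le, Real.rpow_neg_one, ← mul_assoc, ← Real.rpow_add ht,
    ← div_eq_mul_inv, hexp, Real.rpow_sub_one ht.ne']
  ring

lemma integrableOn_heatProfile_mul_rpow {β : ℝ} (hqβ : q + β < 0) (hc : 0 < c) :
    IntegrableOn (fun t ↦ heatProfile q c t * t ^ β) (Set.Ioi 0) :=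
  (integrableOn_heatProfile hqβ hc).congr_fun
    (fun _ ht ↦ (heatProfile_mul_rpow β ht).symm) measurableSet_Ioi

lemma integrableOn_heatProfile_mul_min_rpow (hq : q < 0) (hqσ : q + σ / 2 < 0) (hc : 0 < c) :
    IntegrableOn (fun t ↦ heatProfile q c t * min √t 1 ^ σ) (Set.Ioi 0) := by
  refine integrable_of_ae_mem_uIcc (integrableOn_heatProfile_mul_rpow hqσ hc)
    (integrableOn_heatProfile hq hc) (by fun_prop)
    (ae_restrict_of_forall_mem measurableSet_Ioi fun t (ht : 0 < t) ↦ ?_)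
  rcases min_choice √t 1 with hmin | hmin
  · rw [hmin, Real.sqrt_eq_rpow, ← Real.rpow_mul ht.le, one_div_mul_eq_div]
    exact Set.left_mem_uIcc
  · rw [hmin, Real.one_rpow, mul_one]
    exact Set.right_mem_uIcc

lemma integrableOn_heatProfile_mul_max_rpow (hq : q < 0) (hqσ : q + σ < 0) (hc : 0 < c) :
    IntegrableOn (fun t ↦ heatProfile q c t * max t 1 ^ σ) (Set.Ioi 0) := by
  refine integrable_of_ae_mem_uIcc (integrableOn_heatProfile_mul_rpow hqσ hc)
    (integrableOn_heatProfile hq hc) (by fun_prop) (.of_forall fun t ↦ ?_)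
  rcases max_choice t 1 with hmax | hmax
  · rw [hmax]
    exact Set.left_mem_uIcc
  · rw [hmax, Real.one_rpow, mul_one]
    exact Set.right_mem_uIcc

lemma exists_bounds_integral_heatProfile_mul_rpow (hq : q < 0) (hqσ : q + σ < 0) (hc : 0 < c)
    {M : ℝ} (hM : 0 < M) :
    ∃ C₁ C₂ : ℝ, 0 < C₁ ∧ C₁ ≤ C₂ ∧ ∀ w : ℝ → ℝ, Measurable w →
      (∀ t, 0 < t → w t ∈ Set.Icc (min √t 1) (M * max t 1)) →
        ∫ t in Set.Ioi 0, heatProfile q c t * w t ^ σ ∈ Set.Icc C₁ C₂ := by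
  set lower : ℝ → ℝ := fun t ↦ heatProfile q c t * min √t 1 ^ σ
  set upper : ℝ → ℝ := fun t ↦ heatProfile q c t * (M * max t 1) ^ σ
  have hlower : IntegrableOn lower (Set.Ioi 0) :=
    integrableOn_heatProfile_mul_min_rpow hq (by linarith) hc
  have hupper_eq : upper = fun t ↦ M ^ σ * (heatProfile q c t * max t 1 ^ σ) := by
    ext t
    simp only [upper, Real.mul_rpow hM.le (le_max_of_le_right zero_le_one)]
    ring
  have hupper : IntegrableOn upper (Set.Ioi 0) := by
    rw [hupper_eq]
    exact (integrableOn_heatProfile_mul_max_rpow hq hqσ hc).const_mul (M ^ σ)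
  refine ⟨∫ t in Set.Ioi 0, min (lower t) (upper t), ∫ t in Set.Ioi 0, max (lower t) (upper t),
    setIntegral_pos_of_forall_pos measurableSet_Ioi (by simp) (hlower.inf hupper)
      fun t (ht : 0 < t) ↦ ?_,
    integral_mono (hlower.inf hupper) (hlower.sup hupper) fun _ ↦ min_le_max, fun w hw hwt ↦ ?_⟩
  · have hprofile : 0 < heatProfile q c t := heatProfile_pos ht
    exact lt_min (by positivity) (by positivity)
  · refine integral_mem_Icc_of_ae_mem_uIcc hlower hupper (by fun_prop)
      (ae_restrict_of_forall_mem measurableSet_Ioi fun t ht ↦ ?_)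
    exact mul_mem_uIcc (heatProfile_pos ht).le
      (rpow_mem_uIcc σ (lt_min (Real.sqrt_pos.mpr ht) one_pos) (hwt t ht))

end HeatProfile

section NormalizedWeight

variable {a b u M : ℝ}

lemma min_le_min_mul_max_div (ha : 0 < a) : min u 1 ≤ min a 1 * max (u / a) 1 := by
  rcases le_total a 1 with h | h
  · calc min u 1 ≤ a * (u / a) := by rw [mul_div_cancel₀ _ ha.ne']; exact min_le_left _ _
      _ ≤ min a 1 * max (u / a) 1 := by
        rw [min_eq_left h]
        gcongr
        exact le_max_left _ _
  · rw [min_eq_right h, one_mul]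
    exact (min_le_right u 1).trans (le_max_right _ 1)

lemma min_mul_max_div_le_max (ha : 0 < a) (hu : 0 ≤ u) :
    min a 1 * max (u / a) 1 ≤ max u 1 := by
  rw [mul_max_of_nonneg _ _ (le_min ha.le zero_le_one), mul_one]
  refine max_le_max ?_ (min_le_right a 1)
  calc min a 1 * (u / a) ≤ a * (u / a) := by gcongr; exact min_le_left a 1
    _ = u := mul_div_cancel₀ u ha.ne'

lemma max_div_le_mul_max (hu : 0 ≤ u) (hM : 1 ≤ M) (hMb : 1 ≤ M * b) :
    max (u / b) 1 ≤ M * max u 1 := by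
  have hb : 0 < b := pos_of_mul_pos_right (one_pos.trans_le hMb) (zero_le_one.trans hM)
  refine max_le ?_ (one_le_mul_of_one_le_of_one_le hM (le_max_right u 1))
  calc u / b ≤ M * u := by rw [div_le_iff₀ hb]; nlinarith
    _ ≤ M * max u 1 := by gcongr; exact le_max_left u 1

lemma max_sqrt_one_mul_self (t : ℝ) : max √t 1 * max √t 1 = max t 1 := by
  rcases le_total t 1 with h | h
  · rw [max_eq_right h, max_eq_right (Real.sqrt_le_one.mpr h), one_mul]
  · rw [max_eq_left h, max_eq_left (Real.one_le_sqrt.mpr h),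
      Real.mul_self_sqrt (zero_le_one.trans h)]

/-- The product of the bases of the two singular weights, for points at radii `a` and `b` and at
unit distance, normalized by `min a 1` so that it has bounds uniform in `a`. -/
noncomputable def normalizedWeight (a b t : ℝ) : ℝ :=
  min a 1 * max (√t / a) 1 * max (√t / b) 1

@[fun_prop]
lemma measurable_normalizedWeight : Measurable (normalizedWeight a b) := by
  unfold normalizedWeight
  fun_prop

lemma normalizedWeight_mem_Icc (ha : 0 < a) (hM : 1 ≤ M) (hMb : 1 ≤ M * b) (t : ℝ) :
    normalizedWeight a b t ∈ Set.Icc (min √t 1) (M * max t 1) := by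
  have hmin : 0 ≤ min √t 1 := le_min (Real.sqrt_nonneg t) zero_le_one
  have hlower : min √t 1 ≤ min a 1 * max (√t / a) 1 := min_le_min_mul_max_div ha
  refine ⟨hlower.trans (le_mul_of_one_le_right (hmin.trans hlower) (le_max_right _ _)), ?_⟩
  calc normalizedWeight a b t ≤ max √t 1 * (M * max √t 1) :=
        mul_le_mul (min_mul_max_div_le_max ha (Real.sqrt_nonneg t))
          (max_div_le_mul_max (Real.sqrt_nonneg t) hM hMb) (by positivity) (by positivity)
    _ = M * max t 1 := by rw [mul_left_comm, max_sqrt_one_mul_self]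

end NormalizedWeight

/-- The time integral of the heat kernel bound for the Schrödinger operator with inverse-square
potential, for points at radii `X` and `Y` and at distance `r`. The exponent `α` stands for
`s - d`. -/
noncomputable def rieszHeatIntegral (α σ c r X Y : ℝ) : ℝ :=
  ∫ τ in Set.Ioi 0, τ ^ (α / 2) * Real.exp (-c * r ^ 2 / τ)
    * max (√τ / X) 1 ^ σ * max (√τ / Y) 1 ^ σ / τ

section RieszHeatIntegral

variable {α σ c r X Y a b : ℝ}

lemma rieszHeatIntegral_eq_rpow_mul (hr : 0 < r) :
    rieszHeatIntegral α σ c r X Y = r ^ α * rieszHeatIntegral α σ c 1 (X / r) (Y / r) := by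
  have hr2 : 0 < r ^ 2 := by positivity
  have hsubst := integral_comp_mul_left_Ioi (fun τ : ℝ ↦ τ ^ (α / 2) * Real.exp (-c * r ^ 2 / τ)
    * max (√τ / X) 1 ^ σ * max (√τ / Y) 1 ^ σ / τ) 0 hr2
  rw [mul_zero, smul_eq_mul, eq_inv_mul_iff_mul_eq₀ hr2.ne', ← integral_const_mul] at hsubst
  rw [rieszHeatIntegral, ← hsubst, rieszHeatIntegral, ← integral_const_mul]
  refine setIntegral_congr_fun measurableSet_Ioi fun t (ht : 0 < t) ↦ ?_
  have hsqrt (Z : ℝ) : √(r ^ 2 * t) / Z = √t / (Z / r) := by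
    rw [Real.sqrt_mul hr2.le, Real.sqrt_sq hr.le, div_div_eq_mul_div, mul_comm]
  have hpow : (r ^ 2 * t) ^ (α / 2) = r ^ α * t ^ (α / 2) := by
    rw [Real.mul_rpow hr2.le ht.le, ← Real.rpow_natCast_mul hr.le, Nat.cast_ofNat,
      mul_div_cancel₀ _ two_ne_zero]
  have hexp : -c * r ^ 2 / (r ^ 2 * t) = -c * 1 ^ 2 / t := by field_simp
  simp only [hsqrt, hpow, hexp]
  field_simp

lemma min_rpow_mul_rieszHeatIntegral_one (ha : 0 < a) :
    min a 1 ^ σ * rieszHeatIntegral α σ c 1 a b =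
      ∫ t in Set.Ioi 0, heatProfile (α / 2) c t * normalizedWeight a b t ^ σ := by
  have hmin : 0 ≤ min a 1 := le_min ha.le zero_le_one
  rw [rieszHeatIntegral, ← integral_const_mul]
  congr 1 with t
  rw [normalizedWeight, Real.mul_rpow (by positivity) (by positivity),
    Real.mul_rpow hmin (by positivity), heatProfile, one_pow, mul_one]
  ring

lemma rieszHeatIntegral_div_eq (hr : 0 < r) (hX : 0 < X) :
    rieszHeatIntegral α σ c r X Y / (r ^ α * min (X / r) 1 ^ (-σ)) =
      ∫ t in Set.Ioi 0,
        heatProfile (α / 2) c t * normalizedWeight (X / r) (Y / r) t ^ σ := by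
  have hXr : 0 < X / r := div_pos hX hr
  rw [← min_rpow_mul_rieszHeatIntegral_one hXr, rieszHeatIntegral_eq_rpow_mul hr,
    mul_div_mul_left _ _ (Real.rpow_pos_of_pos hr α).ne',
    Real.rpow_neg (le_min hXr.le zero_le_one), div_inv_eq_mul, mul_comm]

lemma exists_bounds_rieszHeatIntegral_div (hα : α < 0) (hασ : α + 2 * σ < 0) (hc : 0 < c)
    {M : ℝ} (hM : 1 ≤ M) :
    ∃ C₁ C₂ : ℝ, 0 < C₁ ∧ C₁ ≤ C₂ ∧ ∀ r X Y : ℝ, 0 < r → 0 < X → r ≤ M * Y →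
      rieszHeatIntegral α σ c r X Y / (r ^ α * min (X / r) 1 ^ (-σ)) ∈ Set.Icc C₁ C₂ := by
  obtain ⟨C₁, C₂, hC₁, hC₁₂, hbounds⟩ := exists_bounds_integral_heatProfile_mul_rpow
    (q := α / 2) (σ := σ) (by linarith) (by linarith) hc (one_pos.trans_le hM)
  refine ⟨C₁, C₂, hC₁, hC₁₂, fun r X Y hr hX hrY ↦ ?_⟩
  have hMY : 1 ≤ M * (Y / r) := by rwa [← mul_div_assoc, one_le_div hr]
  rw [rieszHeatIntegral_div_eq hr hX]
  exact hbounds _ measurable_normalizedWeight fun t _ ↦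
    normalizedWeight_mem_Icc (div_pos hX hr) hM hMY t

end RieszHeatIntegral

theorem riesz_kernel_two_sided_general {E : Type*} [NormedAddCommGroup E] {α σ c : ℝ}
    (hα : α < 0) (hασ : α + 2 * σ < 0) (hc : 0 < c) :
    ∃ C₁ C₂ : ℝ, 0 < C₁ ∧ C₁ ≤ C₂ ∧ ∀ x y : E, x ≠ 0 → ‖x‖ ≤ ‖y‖ → x ≠ y →
      rieszHeatIntegral α σ c ‖x - y‖ ‖x‖ ‖y‖ /
        (‖x - y‖ ^ α * min (‖x‖ / ‖x - y‖) 1 ^ (-σ)) ∈ Set.Icc C₁ C₂ := by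
  obtain ⟨C₁, C₂, hC₁, hC₁₂, hbounds⟩ :=
    exists_bounds_rieszHeatIntegral_div hα hασ hc one_le_two
  refine ⟨C₁, C₂, hC₁, hC₁₂, fun x y hx hxy hne ↦ ?_⟩
  have hdist : ‖x - y‖ ≤ 2 * ‖y‖ := by linarith [norm_sub_le x y]
  exact hbounds _ _ _ (norm_sub_pos_iff.mpr hne) (norm_pos_iff.mpr hx) hdist

/-- Two-sided bound for the time-integral of the heat kernel bounds: for `d ≥ 3`,
`σ ≤ (d-2)/2`, `0 < s < d` with `d - s - 2σ > 0` and `c > 0`, there are constants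
`0 < C₁ ≤ C₂` such that for all nonzero `x, y` with `|x| ≤ |y|`, `x ≠ y`,
the ratio of `∫₀^∞ τ^{(s-d)/2} e^{-c|x-y|²/τ} (max(√τ/|x|,1))^σ (max(√τ/|y|,1))^σ dτ/τ`
to `|x-y|^{s-d} (min(|x|/|x-y|,1))^{-σ}` lies in `[C₁, C₂]`. -/
theorem riesz_kernel_two_sided (d : ℕ) (hd : 3 ≤ d) (s σ c : ℝ)
    (hσ : σ ≤ ((d : ℝ) - 2) / 2) (hs0 : 0 < s) (hsd : s < d)
    (hds : 0 < (d : ℝ) - s - 2 * σ) (hc : 0 < c) :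
    ∃ C₁ C₂ : ℝ, 0 < C₁ ∧ C₁ ≤ C₂ ∧
      ∀ x y : EuclideanSpace ℝ (Fin d), x ≠ 0 → ‖x‖ ≤ ‖y‖ → x ≠ y →
        (C₁ ≤ (∫ τ in Set.Ioi (0 : ℝ),
                τ ^ ((s - (d : ℝ)) / 2) * Real.exp (-c * ‖x - y‖ ^ 2 / τ)
                  * (max (Real.sqrt τ / ‖x‖) 1) ^ σ
                  * (max (Real.sqrt τ / ‖y‖) 1) ^ σ / τ)
            / (‖x - y‖ ^ (s - (d : ℝ)) * (min (‖x‖ / ‖x - y‖) 1) ^ (-σ))) ∧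
        ((∫ τ in Set.Ioi (0 : ℝ),
                τ ^ ((s - (d : ℝ)) / 2) * Real.exp (-c * ‖x - y‖ ^ 2 / τ)
                  * (max (Real.sqrt τ / ‖x‖) 1) ^ σ
                  * (max (Real.sqrt τ / ‖y‖) 1) ^ σ / τ)
            / (‖x - y‖ ^ (s - (d : ℝ)) * (min (‖x‖ / ‖x - y‖) 1) ^ (-σ)) ≤ C₂) :=
  riesz_kernel_two_sided_general (E := EuclideanSpace ℝ (Fin d)) (α := s - d)
    (by linarith) (by linarith) hc
end

section
/- Let $d \ge 3$. There is a constant $C$ depending only on $d$ such that for all $t > 0$ and all $x, y \in \mathbb{R}^d$ with $|x| \ge \sqrt{t}$ and $|y| \ge \sqrt{t}$: $\int_0^t \int_{\mathbb{R}^d} (t-s)^{-\frac{d}{2}} e^{-\frac{|x-z|^2}{4(t-s)}}\, \frac{1}{|z|^2}\, s^{-\frac{d}{2}} e^{-\frac{|z-y|^2}{4s}}\,dz\,ds \le C\, t^{-\frac{d}{2}} e^{-\frac{|x-y|^2}{16 t}}\, \frac{t}{(|x|+|y|)^2}$. -/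
open MeasureTheory

/-!
Doubling both times in `g_τ(x - z) g_s(z - y)` costs a factor `2 ^ d` and leaves over `exp (-q)`
with `q = (‖x - z‖² / τ + ‖z - y‖² / s) / 8`. Since `(‖x‖ + ‖y‖)² ≤ 24 (‖z‖² + τ + s) exp q`, this
leftover trades the weight `‖z‖⁻²` for `(1 + (τ + s) ‖z‖⁻²) / (‖x‖ + ‖y‖)²`. The term `1` is
integrated by Chapman–Kolmogorov. For the other term split space at radius `r = √(τ + s) / 2`:
outside the ball `‖z‖⁻² ≤ r⁻²`, while inside it `z` is at distance at least `r` from both `x` and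
`y`, so that both Gaussians are `O(r ^ (-d))`, and `‖z‖⁻²` is integrable because `d > 2`. All
this is uniform in `s` when `τ = t - s`, so the time integral only contributes a factor `t`.
-/

lemma rpow_mul_exp_neg_le_rpow_self {p u : ℝ} (hp : 0 ≤ p) (hu : 0 ≤ u) :
    u ^ p * Real.exp (-u) ≤ p ^ p := by
  rcases hp.eq_or_lt with rfl | hp
  · simpa using hu
  have hexp : u / p ≤ Real.exp (u / p) := by linarith [Real.add_one_le_exp (u / p)]
  have hpow : u ^ p ≤ p ^ p * Real.exp u := calc
    u ^ p = (p * (u / p)) ^ p := by rw [mul_div_cancel₀ u hp.ne']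
    _ ≤ (p * Real.exp (u / p)) ^ p := by gcongr
    _ = p ^ p * Real.exp u := by
      rw [Real.mul_rpow hp.le (Real.exp_pos _).le, ← Real.exp_mul, div_mul_cancel₀ u hp.ne']
  rwa [Real.exp_neg, ← div_eq_mul_inv, div_le_iff₀ (Real.exp_pos u)]

lemma norm_sub_sq_div_le {E : Type*} [SeminormedAddCommGroup E] {τ s : ℝ} (hτ : 0 < τ)
    (hs : 0 < s) (x y z : E) : ‖x - y‖ ^ 2 / (τ + s) ≤ ‖x - z‖ ^ 2 / τ + ‖z - y‖ ^ 2 / s := calc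
  ‖x - y‖ ^ 2 / (τ + s) ≤ (‖x - z‖ + ‖z - y‖) ^ 2 / (τ + s) := by
    gcongr
    exact norm_sub_le_norm_sub_add_norm_sub x z y
  _ ≤ ‖x - z‖ ^ 2 / τ + ‖z - y‖ ^ 2 / s := by
    simpa using Finset.sq_sum_div_le_sum_sq_div Finset.univ ![‖x - z‖, ‖z - y‖] (g := ![τ, s])
      (by simp [hτ, hs])

lemma sq_add_norm_le_mul_exp {E : Type*} [SeminormedAddCommGroup E] {τ s : ℝ} (hτ : 0 < τ)
    (hs : 0 < s) (x y z : E) :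
    (‖x‖ + ‖y‖) ^ 2 ≤ 24 * (‖z‖ ^ 2 + (τ + s)) *
      Real.exp ((‖x - z‖ ^ 2 / τ + ‖z - y‖ ^ 2 / s) / 8) := by
  set A := ‖x - z‖ ^ 2 / τ with hA
  set B := ‖z - y‖ ^ 2 / s with hB
  have hA0 : 0 ≤ A := by positivity
  have hB0 : 0 ≤ B := by positivity
  have hAτ : ‖x - z‖ ^ 2 = A * τ := by rw [hA, div_mul_cancel₀ _ hτ.ne']
  have hBs : ‖z - y‖ ^ 2 = B * s := by rw [hB, div_mul_cancel₀ _ hs.ne']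
  have htri : ‖x‖ + ‖y‖ ≤ 2 * ‖z‖ + ‖x - z‖ + ‖z - y‖ := by
    linarith [norm_le_norm_add_norm_sub' x z, norm_le_norm_add_norm_sub z y]
  have hexp : (A + B) / 8 + 1 ≤ Real.exp ((A + B) / 8) := Real.add_one_le_exp _
  calc (‖x‖ + ‖y‖) ^ 2
      ≤ (2 * ‖z‖ + ‖x - z‖ + ‖z - y‖) ^ 2 := by gcongr
    _ ≤ 3 * ((2 * ‖z‖) ^ 2 + ‖x - z‖ ^ 2 + ‖z - y‖ ^ 2) := by
        linarith [sq_nonneg (2 * ‖z‖ - ‖x - z‖), sq_nonneg (2 * ‖z‖ - ‖z - y‖),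
          sq_nonneg (‖x - z‖ - ‖z - y‖)]
    _ ≤ 24 * (‖z‖ ^ 2 + (τ + s)) * ((A + B) / 8 + 1) := by
        rw [hAτ, hBs]
        linarith [mul_nonneg hA0 hs.le, mul_nonneg hB0 hτ.le,
          mul_nonneg (add_nonneg hA0 hB0) (sq_nonneg ‖z‖), sq_nonneg ‖z‖]
    _ ≤ 24 * (‖z‖ ^ 2 + (τ + s)) * Real.exp ((A + B) / 8) := by gcongr

section RieszPotential

variable {E : Type*} [NormedAddCommGroup E] [NormedSpace ℝ E] [FiniteDimensional ℝ E]
  [MeasurableSpace E] [BorelSpace E] (μ : Measure E) [μ.IsAddHaarMeasure]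

lemma integrableOn_ball_norm_rpow_neg {α : ℝ} (hE : 0 < Module.finrank ℝ E)
    (hα : α < Module.finrank ℝ E) (r : ℝ) :
    IntegrableOn (fun z : E ↦ ‖z‖ ^ (-α)) (Metric.ball 0 r) μ := by
  refine integrableOn_ball_of_norm_le_rpow hE (C := 1) hα (ae_of_all _ fun z ↦ ?_)
    (by fun_prop : Measurable fun z : E ↦ ‖z‖ ^ (-α)).aestronglyMeasurable
  rw [one_mul, Real.norm_of_nonneg (by positivity)]

lemma setIntegral_ball_norm_rpow_neg (α : ℝ) {r : ℝ} (hr : 0 < r) :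
    ∫ z in Metric.ball (0 : E) r, ‖z‖ ^ (-α) ∂μ =
      r ^ Module.finrank ℝ E * r ^ (-α) * ∫ z in Metric.ball (0 : E) 1, ‖z‖ ^ (-α) ∂μ := by
  have hscale := Measure.setIntegral_comp_smul_of_pos μ (fun z : E ↦ ‖z‖ ^ (-α))
    (Metric.ball 0 1) hr
  simp only [norm_smul, Real.norm_of_nonneg hr.le, Real.mul_rpow hr.le (norm_nonneg _),
    integral_const_mul, smul_unitBall_of_pos hr, smul_eq_mul] at hscale
  rw [mul_assoc, hscale, mul_inv_cancel_left₀ (by positivity)]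

end RieszPotential

noncomputable section HeatGaussian

variable {E : Type*} [NormedAddCommGroup E] [NormedSpace ℝ E]

/-- The heat kernel `t ^ (-d/2) exp (-|v|² / (4t))` of `E`, where `d = dim E`, without its
normalising factor `(4π) ^ (-d/2)`. -/
def heatGaussian (t : ℝ) (v : E) : ℝ :=
  t ^ (-(Module.finrank ℝ E : ℝ) / 2) * Real.exp (-‖v‖ ^ 2 / (4 * t))

@[fun_prop]
lemma continuous_heatGaussian (t : ℝ) : Continuous (heatGaussian t : E → ℝ) := by
  unfold heatGaussian
  fun_prop

lemma heatGaussian_pos {t : ℝ} (ht : 0 < t) (v : E) : 0 < heatGaussian t v := by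
  unfold heatGaussian
  positivity

lemma heatGaussian_eq_heatGaussian_two_mul {t : ℝ} (ht : 0 < t) (v : E) :
    heatGaussian t v = 2 ^ ((Module.finrank ℝ E : ℝ) / 2) * heatGaussian (2 * t) v *
      Real.exp (-(‖v‖ ^ 2 / t) / 8) := by
  have hexp : Real.exp (-‖v‖ ^ 2 / (4 * t)) =
      Real.exp (-‖v‖ ^ 2 / (4 * (2 * t))) * Real.exp (-(‖v‖ ^ 2 / t) / 8) := by
    rw [← Real.exp_add]
    congr 1
    field
  have hpow :
      (2 : ℝ) ^ ((Module.finrank ℝ E : ℝ) / 2) * 2 ^ (-(Module.finrank ℝ E : ℝ) / 2) = 1 := by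
    rw [← Real.rpow_add two_pos]
    simp [neg_div]
  rw [heatGaussian, heatGaussian, hexp, Real.mul_rpow zero_le_two ht.le]
  linear_combination (-(t ^ (-(Module.finrank ℝ E : ℝ) / 2) *
    Real.exp (-‖v‖ ^ 2 / (4 * (2 * t))) * Real.exp (-(‖v‖ ^ 2 / t) / 8))) * hpow

lemma heatGaussian_le_of_le_norm {t r : ℝ} (ht : 0 < t) (hr : 0 < r) {v : E} (hv : r ≤ ‖v‖) :
    heatGaussian t v ≤ (4 * Module.finrank ℝ E) ^ ((Module.finrank ℝ E : ℝ) / 2) *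
      (r ^ Module.finrank ℝ E)⁻¹ * Real.exp (-(‖v‖ ^ 2 / t) / 8) := by
  set d := Module.finrank ℝ E
  set u := ‖v‖ ^ 2 / (8 * t) with hu
  have hv0 : 0 < ‖v‖ := hr.trans_le hv
  have hexp : Real.exp (-‖v‖ ^ 2 / (4 * t)) =
      Real.exp (-u) * Real.exp (-(‖v‖ ^ 2 / t) / 8) := by
    rw [← Real.exp_add, hu]
    congr 1
    field
  have hpow : t ^ (-(d : ℝ) / 2) = 8 ^ ((d : ℝ) / 2) * u ^ ((d : ℝ) / 2) * (‖v‖ ^ d)⁻¹ := by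
    have hnorm : ‖v‖ ^ d = (‖v‖ ^ 2) ^ ((d : ℝ) / 2) := by
      rw [← Real.rpow_natCast_mul hv0.le, ← Real.rpow_natCast]
      congr 1
      push_cast
      ring
    rw [hnorm, ← Real.mul_rpow (by norm_num) (by positivity), ← Real.inv_rpow (by positivity),
      ← Real.mul_rpow (by positivity) (by positivity), neg_div, Real.rpow_neg ht.le,
      ← Real.inv_rpow ht.le]
    congr 1
    rw [hu]
    field
  calc heatGaussian t v
      = 8 ^ ((d : ℝ) / 2) * (u ^ ((d : ℝ) / 2) * Real.exp (-u)) * (‖v‖ ^ d)⁻¹ *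
          Real.exp (-(‖v‖ ^ 2 / t) / 8) := by
        rw [heatGaussian, hexp, hpow]
        ring
    _ ≤ 8 ^ ((d : ℝ) / 2) * ((d : ℝ) / 2) ^ ((d : ℝ) / 2) * (r ^ d)⁻¹ *
          Real.exp (-(‖v‖ ^ 2 / t) / 8) := by
        gcongr
        exact rpow_mul_exp_neg_le_rpow_self (by positivity) (by positivity)
    _ = (4 * d) ^ ((d : ℝ) / 2) * (r ^ d)⁻¹ * Real.exp (-(‖v‖ ^ 2 / t) / 8) := by
        rw [← Real.mul_rpow (by norm_num) (by positivity)]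
        ring_nf

lemma heatGaussian_two_mul_le {t : ℝ} (ht : 0 < t) (v : E) :
    heatGaussian (2 * t) v ≤
      t ^ (-(Module.finrank ℝ E : ℝ) / 2) * Real.exp (-‖v‖ ^ 2 / (16 * t)) := by
  have hd : -(Module.finrank ℝ E : ℝ) / 2 ≤ 0 :=
    div_nonpos_of_nonpos_of_nonneg (neg_nonpos.mpr (Nat.cast_nonneg _)) zero_le_two
  refine mul_le_mul (Real.rpow_le_rpow_of_nonpos ht (by linarith) hd) ?_ (by positivity)
    (by positivity)
  rw [Real.exp_le_exp, neg_div, neg_div, neg_le_neg_iff]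
  exact div_le_div_of_nonneg_left (by positivity) (by positivity) (by linarith)

lemma inv_norm_sq_mul_heatGaussian_mul_heatGaussian_le {τ s : ℝ} (hτ : 0 < τ) (hs : 0 < s)
    {x : E} (hx : x ≠ 0) (y z : E) :
    (‖z‖ ^ 2)⁻¹ * (heatGaussian τ (x - z) * heatGaussian s (z - y)) ≤
      24 * 2 ^ Module.finrank ℝ E / (‖x‖ + ‖y‖) ^ 2 * ((1 + (τ + s) * (‖z‖ ^ 2)⁻¹) *
        (heatGaussian (2 * τ) (x - z) * heatGaussian (2 * s) (z - y))) := by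
  set P := heatGaussian (2 * τ) (x - z) * heatGaussian (2 * s) (z - y) with hP
  set q := (‖x - z‖ ^ 2 / τ + ‖z - y‖ ^ 2 / s) / 8 with hq
  have hP0 : 0 ≤ P := mul_nonneg (heatGaussian_pos (by positivity) _).le
    (heatGaussian_pos (by positivity) _).le
  have hdouble : heatGaussian τ (x - z) * heatGaussian s (z - y) =
      2 ^ Module.finrank ℝ E * P * Real.exp (-q) := by
    have hpow : (2 : ℝ) ^ Module.finrank ℝ E =
        2 ^ ((Module.finrank ℝ E : ℝ) / 2) * 2 ^ ((Module.finrank ℝ E : ℝ) / 2) := by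
      rw [← Real.rpow_add two_pos, add_halves, Real.rpow_natCast]
    have hexp : Real.exp (-q) =
        Real.exp (-(‖x - z‖ ^ 2 / τ) / 8) * Real.exp (-(‖z - y‖ ^ 2 / s) / 8) := by
      rw [← Real.exp_add, hq]
      ring_nf
    rw [heatGaussian_eq_heatGaussian_two_mul hτ, heatGaussian_eq_heatGaussian_two_mul hs,
      hpow, hexp, hP]
    ring
  have hweight : Real.exp (-q) ≤ 24 * (‖z‖ ^ 2 + (τ + s)) / (‖x‖ + ‖y‖) ^ 2 := by
    rw [Real.exp_neg, le_div_iff₀ (by positivity), inv_mul_le_iff₀ (Real.exp_pos _), mul_comm]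
    exact sq_add_norm_le_mul_exp hτ hs x y z
  calc (‖z‖ ^ 2)⁻¹ * (heatGaussian τ (x - z) * heatGaussian s (z - y))
      = (‖z‖ ^ 2)⁻¹ * (2 ^ Module.finrank ℝ E * P * Real.exp (-q)) := by rw [hdouble]
    _ ≤ (‖z‖ ^ 2)⁻¹ * (2 ^ Module.finrank ℝ E * P *
          (24 * (‖z‖ ^ 2 + (τ + s)) / (‖x‖ + ‖y‖) ^ 2)) := by gcongr
    _ = 24 * 2 ^ Module.finrank ℝ E / (‖x‖ + ‖y‖) ^ 2 *
          (((‖z‖ ^ 2)⁻¹ * ‖z‖ ^ 2 + (τ + s) * (‖z‖ ^ 2)⁻¹) * P) := by ring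
    _ ≤ 24 * 2 ^ Module.finrank ℝ E / (‖x‖ + ‖y‖) ^ 2 *
          ((1 + (τ + s) * (‖z‖ ^ 2)⁻¹) * P) := by
        gcongr
        exact inv_mul_le_one

lemma heatGaussian_mul_heatGaussian_le_of_norm_le {τ s r : ℝ} (hτ : 0 < τ) (hs : 0 < s)
    (hr : 0 < r) {x y z : E} (hx : 2 * r ≤ ‖x‖) (hy : 2 * r ≤ ‖y‖) (hz : ‖z‖ ≤ r) :
    heatGaussian τ (x - z) * heatGaussian s (z - y) ≤
      (4 * Module.finrank ℝ E) ^ Module.finrank ℝ E * ((r ^ Module.finrank ℝ E) ^ 2)⁻¹ *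
        Real.exp (-(‖x - y‖ ^ 2 / (τ + s)) / 8) := by
  have hxz : r ≤ ‖x - z‖ := by linarith [norm_sub_norm_le x z]
  have hzy : r ≤ ‖z - y‖ := by linarith [norm_sub_norm_le y z, norm_sub_rev y z]
  have hpow : ((4 * Module.finrank ℝ E : ℝ) ^ ((Module.finrank ℝ E : ℝ) / 2)) ^ 2 =
      (4 * Module.finrank ℝ E) ^ Module.finrank ℝ E := by
    rw [← Real.rpow_mul_natCast (by positivity), Nat.cast_ofNat, div_mul_cancel₀ _ two_ne_zero,
      Real.rpow_natCast]
  calc heatGaussian τ (x - z) * heatGaussian s (z - y)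
      ≤ ((4 * Module.finrank ℝ E) ^ ((Module.finrank ℝ E : ℝ) / 2) *
            (r ^ Module.finrank ℝ E)⁻¹ * Real.exp (-(‖x - z‖ ^ 2 / τ) / 8)) *
          ((4 * Module.finrank ℝ E) ^ ((Module.finrank ℝ E : ℝ) / 2) *
            (r ^ Module.finrank ℝ E)⁻¹ * Real.exp (-(‖z - y‖ ^ 2 / s) / 8)) :=
        mul_le_mul (heatGaussian_le_of_le_norm hτ hr hxz) (heatGaussian_le_of_le_norm hs hr hzy)
          (heatGaussian_pos hs _).le (by positivity)
    _ = (4 * Module.finrank ℝ E) ^ Module.finrank ℝ E * ((r ^ Module.finrank ℝ E) ^ 2)⁻¹ *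
          Real.exp (-(‖x - z‖ ^ 2 / τ + ‖z - y‖ ^ 2 / s) / 8) := by
        rw [← hpow, neg_add, add_div, Real.exp_add]
        ring
    _ ≤ (4 * Module.finrank ℝ E) ^ Module.finrank ℝ E * ((r ^ Module.finrank ℝ E) ^ 2)⁻¹ *
          Real.exp (-(‖x - y‖ ^ 2 / (τ + s)) / 8) := by
        gcongr
        exact norm_sub_sq_div_le hτ hs x y z

variable [FiniteDimensional ℝ E] [MeasurableSpace E] [BorelSpace E] (μ : Measure E)
  [μ.IsAddHaarMeasure]

lemma setLIntegral_ball_norm_rpow_neg_mul_heatGaussian_le {α : ℝ}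
    (hE : 0 < Module.finrank ℝ E) (hα : α < Module.finrank ℝ E) {τ s r : ℝ} (hτ : 0 < τ)
    (hs : 0 < s) (hr : 0 < r) {x y : E} (hx : 2 * r ≤ ‖x‖) (hy : 2 * r ≤ ‖y‖) :
    ∫⁻ z in Metric.ball 0 r,
        ENNReal.ofReal (‖z‖ ^ (-α) * (heatGaussian τ (x - z) * heatGaussian s (z - y))) ∂μ ≤
      ENNReal.ofReal ((4 * Module.finrank ℝ E) ^ Module.finrank ℝ E *
        (∫ z in Metric.ball (0 : E) 1, ‖z‖ ^ (-α) ∂μ) *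
        (r ^ (-α) * ((r ^ Module.finrank ℝ E)⁻¹ *
          Real.exp (-(‖x - y‖ ^ 2 / (τ + s)) / 8)))) := by
  set M : ℝ := (4 * Module.finrank ℝ E) ^ Module.finrank ℝ E *
    ((r ^ Module.finrank ℝ E) ^ 2)⁻¹ * Real.exp (-(‖x - y‖ ^ 2 / (τ + s)) / 8) with hM
  have hM0 : 0 ≤ M := by positivity
  calc ∫⁻ z in Metric.ball 0 r,
        ENNReal.ofReal (‖z‖ ^ (-α) * (heatGaussian τ (x - z) * heatGaussian s (z - y))) ∂μ
      ≤ ∫⁻ z in Metric.ball (0 : E) r, ENNReal.ofReal M * ENNReal.ofReal (‖z‖ ^ (-α)) ∂μ := by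
        refine setLIntegral_mono (by fun_prop) fun z hz ↦ ?_
        rw [← ENNReal.ofReal_mul hM0, mul_comm M]
        gcongr
        exact heatGaussian_mul_heatGaussian_le_of_norm_le hτ hs hr hx hy
          (mem_ball_zero_iff.mp hz).le
    _ = ENNReal.ofReal (M * ∫ z in Metric.ball (0 : E) r, ‖z‖ ^ (-α) ∂μ) := by
        rw [lintegral_const_mul _ (by fun_prop), ENNReal.ofReal_mul hM0,
          ofReal_integral_eq_lintegral_ofReal (integrableOn_ball_norm_rpow_neg μ hE hα r)
            (ae_of_all _ fun z ↦ by positivity)]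
    _ = _ := by
        rw [setIntegral_ball_norm_rpow_neg μ α hr, hM]
        congr 1
        field

end HeatGaussian

section Semigroup

variable {E : Type*} [NormedAddCommGroup E] [InnerProductSpace ℝ E]

lemma norm_sub_sq_div_add_norm_sub_sq_div {τ s : ℝ} (hτ : τ ≠ 0) (hs : s ≠ 0) (h : τ + s ≠ 0)
    (x y z : E) :
    ‖x - z‖ ^ 2 / τ + ‖z - y‖ ^ 2 / s = ‖x - y‖ ^ 2 / (τ + s) +
      ‖z - (τ + s)⁻¹ • (s • x + τ • y)‖ ^ 2 / (τ * s / (τ + s)) := by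
  set p := z - (τ + s)⁻¹ • (s • x + τ • y) with hp
  have hxz : x - z = (τ / (τ + s)) • (x - y) - p := by
    rw [hp]
    match_scalars <;> field
  have hzy : z - y = (s / (τ + s)) • (x - y) + p := by
    rw [hp]
    match_scalars <;> field
  rw [hxz, hzy, norm_sub_sq_real, norm_add_sq_real]
  simp only [norm_smul, real_inner_smul_left, mul_pow, Real.norm_eq_abs, sq_abs]
  field

lemma heatGaussian_mul_heatGaussian {τ s : ℝ} (hτ : 0 < τ) (hs : 0 < s) (x y z : E) :
    heatGaussian τ (x - z) * heatGaussian s (z - y) = heatGaussian (τ + s) (x - y) *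
      heatGaussian (τ * s / (τ + s)) (z - (τ + s)⁻¹ • (s • x + τ • y)) := by
  have hpow (p : ℝ) : τ ^ p * s ^ p = (τ + s) ^ p * (τ * s / (τ + s)) ^ p := by
    rw [← Real.mul_rpow hτ.le hs.le, ← Real.mul_rpow (by positivity) (by positivity),
      mul_div_cancel₀ _ (by positivity)]
  have hexp : -‖x - z‖ ^ 2 / (4 * τ) + -‖z - y‖ ^ 2 / (4 * s) = -‖x - y‖ ^ 2 / (4 * (τ + s)) +
      -‖z - (τ + s)⁻¹ • (s • x + τ • y)‖ ^ 2 / (4 * (τ * s / (τ + s))) := by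
    have h := norm_sub_sq_div_add_norm_sub_sq_div hτ.ne' hs.ne' (by positivity) x y z
    simp only [neg_div, mul_comm (4 : ℝ), ← div_div]
    linear_combination -h / 4
  simp only [heatGaussian]
  rw [mul_mul_mul_comm, ← Real.exp_add, hpow, hexp, Real.exp_add, mul_mul_mul_comm]

variable [FiniteDimensional ℝ E] [MeasurableSpace E] [BorelSpace E]

lemma lintegral_heatGaussian {t : ℝ} (ht : 0 < t) :
    ∫⁻ z : E, ENNReal.ofReal (heatGaussian t z) =
      ENNReal.ofReal ((4 * Real.pi) ^ ((Module.finrank ℝ E : ℝ) / 2)) := by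
  have hint : ∫ z : E, heatGaussian t z = (4 * Real.pi) ^ ((Module.finrank ℝ E : ℝ) / 2) := by
    have hexp (z : E) : -‖z‖ ^ 2 / (4 * t) = -(4 * t)⁻¹ * ‖z‖ ^ 2 := by ring
    simp only [heatGaussian, integral_const_mul, hexp]
    rw [GaussianFourier.integral_rexp_neg_mul_sq_norm (by positivity), neg_div,
      Real.rpow_neg ht.le, ← Real.inv_rpow ht.le, ← Real.mul_rpow (by positivity) (by positivity)]
    congr 1
    field
  rw [← hint, ofReal_integral_eq_lintegral_ofReal]
  · exact .of_integral_ne_zero (by rw [hint]; positivity)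
  · exact ae_of_all _ fun z ↦ (heatGaussian_pos ht z).le

lemma lintegral_heatGaussian_mul_heatGaussian {τ s : ℝ} (hτ : 0 < τ) (hs : 0 < s) (x y : E) :
    ∫⁻ z, ENNReal.ofReal (heatGaussian τ (x - z) * heatGaussian s (z - y)) =
      ENNReal.ofReal
        ((4 * Real.pi) ^ ((Module.finrank ℝ E : ℝ) / 2) * heatGaussian (τ + s) (x - y)) := by
  have hpos : 0 ≤ heatGaussian (τ + s) (x - y) := (heatGaussian_pos (by positivity) _).le
  simp only [heatGaussian_mul_heatGaussian hτ hs, ENNReal.ofReal_mul hpos]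
  rw [lintegral_const_mul _ (by fun_prop),
    lintegral_sub_right_eq_self (fun z : E ↦ ENNReal.ofReal (heatGaussian _ z)),
    lintegral_heatGaussian (by positivity), ← ENNReal.ofReal_mul hpos, mul_comm]

end Semigroup

section Duhamel

variable {E : Type*} [NormedAddCommGroup E] [InnerProductSpace ℝ E]
  [FiniteDimensional ℝ E] [MeasurableSpace E] [BorelSpace E]

lemma setLIntegral_compl_ball_norm_rpow_neg_mul_heatGaussian_le {α : ℝ} (hα : 0 ≤ α)
    {τ s r : ℝ} (hτ : 0 < τ) (hs : 0 < s) (hr : 0 < r) (x y : E) :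
    ∫⁻ z in (Metric.ball 0 r)ᶜ,
        ENNReal.ofReal (‖z‖ ^ (-α) * (heatGaussian τ (x - z) * heatGaussian s (z - y))) ≤
      ENNReal.ofReal ((4 * Real.pi) ^ ((Module.finrank ℝ E : ℝ) / 2) *
        (r ^ (-α) * heatGaussian (τ + s) (x - y))) := by
  calc ∫⁻ z in (Metric.ball 0 r)ᶜ,
        ENNReal.ofReal (‖z‖ ^ (-α) * (heatGaussian τ (x - z) * heatGaussian s (z - y)))
      ≤ ∫⁻ z in (Metric.ball 0 r)ᶜ, ENNReal.ofReal (r ^ (-α)) *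
          ENNReal.ofReal (heatGaussian τ (x - z) * heatGaussian s (z - y)) := by
        refine setLIntegral_mono (by fun_prop) fun z hz ↦ ?_
        have hrz : r ≤ ‖z‖ := by simpa using hz
        rw [← ENNReal.ofReal_mul (by positivity)]
        gcongr ENNReal.ofReal (?_ * _)
        · exact mul_nonneg (heatGaussian_pos hτ _).le (heatGaussian_pos hs _).le
        · exact Real.rpow_le_rpow_of_nonpos hr hrz (neg_nonpos.mpr hα)
    _ ≤ ∫⁻ z, ENNReal.ofReal (r ^ (-α)) *
          ENNReal.ofReal (heatGaussian τ (x - z) * heatGaussian s (z - y)) :=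
        setLIntegral_le_lintegral _ _
    _ = _ := by
        rw [lintegral_const_mul _ (by fun_prop), lintegral_heatGaussian_mul_heatGaussian hτ hs,
          ← ENNReal.ofReal_mul (by positivity)]
        congr 1
        ring

lemma exists_lintegral_norm_rpow_neg_mul_heatGaussian_le {α : ℝ} (hα0 : 0 ≤ α)
    (hα : α < Module.finrank ℝ E) :
    ∃ C : ℝ, 0 ≤ C ∧ ∀ ⦃τ s r : ℝ⦄, 0 < τ → 0 < s → 0 < r →
      ∀ x y : E, 2 * r ≤ ‖x‖ → 2 * r ≤ ‖y‖ →
        ∫⁻ z, ENNReal.ofReal (‖z‖ ^ (-α) * (heatGaussian τ (x - z) * heatGaussian s (z - y))) ≤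
          ENNReal.ofReal (C * (r ^ (-α) * (heatGaussian (τ + s) (x - y) +
            (r ^ Module.finrank ℝ E)⁻¹ * Real.exp (-(‖x - y‖ ^ 2 / (τ + s)) / 8)))) := by
  have hE : 0 < Module.finrank ℝ E := by exact_mod_cast hα0.trans_lt hα
  set A : ℝ := (4 * Module.finrank ℝ E) ^ Module.finrank ℝ E *
    ∫ z in Metric.ball (0 : E) 1, ‖z‖ ^ (-α)
  set B : ℝ := (4 * Real.pi) ^ ((Module.finrank ℝ E : ℝ) / 2)
  have hA0 : 0 ≤ A := mul_nonneg (by positivity) (integral_nonneg fun z ↦ by positivity)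
  have hB0 : 0 ≤ B := by positivity
  refine ⟨A + B, by positivity, fun τ s r hτ hs hr x y hx hy ↦ ?_⟩
  set G := heatGaussian (τ + s) (x - y)
  set H := (r ^ Module.finrank ℝ E)⁻¹ * Real.exp (-(‖x - y‖ ^ 2 / (τ + s)) / 8)
  have hG0 : 0 ≤ G := (heatGaussian_pos (by positivity) _).le
  have hH0 : 0 ≤ H := by positivity
  calc ∫⁻ z, ENNReal.ofReal (‖z‖ ^ (-α) * (heatGaussian τ (x - z) * heatGaussian s (z - y)))
      ≤ ENNReal.ofReal (A * (r ^ (-α) * H)) + ENNReal.ofReal (B * (r ^ (-α) * G)) := by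
        rw [← lintegral_add_compl _ (measurableSet_ball (x := (0 : E)) (ε := r))]
        exact add_le_add
          (setLIntegral_ball_norm_rpow_neg_mul_heatGaussian_le volume hE hα hτ hs hr hx hy)
          (setLIntegral_compl_ball_norm_rpow_neg_mul_heatGaussian_le hα0 hτ hs hr x y)
    _ = ENNReal.ofReal (A * (r ^ (-α) * H) + B * (r ^ (-α) * G)) :=
        (ENNReal.ofReal_add (by positivity) (by positivity)).symm
    _ ≤ ENNReal.ofReal ((A + B) * (r ^ (-α) * (G + H))) := by
        refine ENNReal.ofReal_le_ofReal ?_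
        have hcross : 0 ≤ r ^ (-α) * (A * G + B * H) := mul_nonneg (by positivity)
          (add_nonneg (mul_nonneg hA0 hG0) (mul_nonneg hB0 hH0))
        linarith

lemma exists_lintegral_inv_norm_sq_mul_heatGaussian_two_mul_le (hE : 3 ≤ Module.finrank ℝ E) :
    ∃ C : ℝ, 0 ≤ C ∧ ∀ ⦃τ s : ℝ⦄, 0 < τ → 0 < s →
      ∀ x y : E, √(τ + s) ≤ ‖x‖ → √(τ + s) ≤ ‖y‖ →
        ∫⁻ z, ENNReal.ofReal ((τ + s) * (‖z‖ ^ 2)⁻¹ *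
            (heatGaussian (2 * τ) (x - z) * heatGaussian (2 * s) (z - y))) ≤
          ENNReal.ofReal (C * ((τ + s) ^ (-(Module.finrank ℝ E : ℝ) / 2) *
            Real.exp (-‖x - y‖ ^ 2 / (16 * (τ + s))))) := by
  obtain ⟨C, hC, hbound⟩ := exists_lintegral_norm_rpow_neg_mul_heatGaussian_le (E := E)
    zero_le_two (by exact_mod_cast hE)
  refine ⟨4 * C * (1 + 2 ^ Module.finrank ℝ E), by positivity, fun τ s hτ hs x y hx hy ↦ ?_⟩
  have ht : 0 < τ + s := by positivity
  set t := τ + s with ht_def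
  set r := √t / 2 with hr_def
  have hr : 0 < r := by positivity
  have hr2 : r ^ (-2 : ℝ) = 4 / t := by
    rw [Real.rpow_neg hr.le, Real.rpow_two, hr_def, div_pow, Real.sq_sqrt ht.le, inv_div]
    norm_num
  have hrd : (r ^ Module.finrank ℝ E)⁻¹ =
      2 ^ Module.finrank ℝ E * t ^ (-(Module.finrank ℝ E : ℝ) / 2) := by
    rw [hr_def, div_pow, inv_div, neg_div, Real.rpow_neg ht.le,
      Real.rpow_div_two_eq_sqrt _ ht.le, Real.rpow_natCast, div_eq_mul_inv]
  have hexp : Real.exp (-(‖x - y‖ ^ 2 / (2 * τ + 2 * s)) / 8) =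
      Real.exp (-‖x - y‖ ^ 2 / (16 * t)) := by
    congr 1
    rw [ht_def]
    field
  have hsemi : heatGaussian (2 * τ + 2 * s) (x - y) ≤
      t ^ (-(Module.finrank ℝ E : ℝ) / 2) * Real.exp (-‖x - y‖ ^ 2 / (16 * t)) := by
    rw [← mul_add]
    exact heatGaussian_two_mul_le ht _
  have hsing := hbound (mul_pos two_pos hτ) (mul_pos two_pos hs) hr x y
    (by linarith) (by linarith)
  simp only [Real.rpow_neg (norm_nonneg _), Real.rpow_two] at hsing
  simp only [mul_assoc t, ENNReal.ofReal_mul ht.le]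
  rw [lintegral_const_mul _ (by fun_prop)]
  grw [hsing]
  rw [← ENNReal.ofReal_mul ht.le, hr2, hrd, hexp]
  refine ENNReal.ofReal_le_ofReal ?_
  grw [hsemi]
  exact le_of_eq (by field)

lemma exists_lintegral_inv_norm_sq_mul_heatGaussian_le (hE : 3 ≤ Module.finrank ℝ E) :
    ∃ C : ℝ, 0 < C ∧ ∀ ⦃τ s : ℝ⦄, 0 < τ → 0 < s →
      ∀ x y : E, √(τ + s) ≤ ‖x‖ → √(τ + s) ≤ ‖y‖ →
        ∫⁻ z, ENNReal.ofReal ((‖z‖ ^ 2)⁻¹ * (heatGaussian τ (x - z) * heatGaussian s (z - y))) ≤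
          ENNReal.ofReal (C * (τ + s) ^ (-(Module.finrank ℝ E : ℝ) / 2) *
            Real.exp (-‖x - y‖ ^ 2 / (16 * (τ + s))) / (‖x‖ + ‖y‖) ^ 2) := by
  obtain ⟨C, hC, hsing⟩ := exists_lintegral_inv_norm_sq_mul_heatGaussian_two_mul_le hE
  set K : ℝ := (4 * Real.pi) ^ ((Module.finrank ℝ E : ℝ) / 2)
  refine ⟨24 * 2 ^ Module.finrank ℝ E * (K + C), by positivity, fun τ s hτ hs x y hx hy ↦ ?_⟩
  have ht : 0 < τ + s := by positivity
  have hx0 : x ≠ 0 := norm_pos_iff.mp ((Real.sqrt_pos.mpr ht).trans_le hx)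
  set M := 24 * 2 ^ Module.finrank ℝ E / (‖x‖ + ‖y‖) ^ 2 with hM
  have hM0 : 0 ≤ M := by positivity
  set P : E → ℝ := fun z ↦ heatGaussian (2 * τ) (x - z) * heatGaussian (2 * s) (z - y)
  have hP0 (z : E) : 0 ≤ P z := mul_nonneg (heatGaussian_pos (by positivity) _).le
    (heatGaussian_pos (by positivity) _).le
  set G := (τ + s) ^ (-(Module.finrank ℝ E : ℝ) / 2) *
    Real.exp (-‖x - y‖ ^ 2 / (16 * (τ + s))) with hG
  have hsemi : ∫⁻ z, ENNReal.ofReal (P z) ≤ ENNReal.ofReal (K * G) := by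
    rw [lintegral_heatGaussian_mul_heatGaussian (by positivity) (by positivity), ← mul_add]
    gcongr
    exact heatGaussian_two_mul_le ht _
  calc ∫⁻ z, ENNReal.ofReal ((‖z‖ ^ 2)⁻¹ * (heatGaussian τ (x - z) * heatGaussian s (z - y)))
      ≤ ∫⁻ z, ENNReal.ofReal M * (ENNReal.ofReal (P z) +
          ENNReal.ofReal ((τ + s) * (‖z‖ ^ 2)⁻¹ * P z)) := by
        refine lintegral_mono fun z ↦ ?_
        rw [← ENNReal.ofReal_add (hP0 z) (mul_nonneg (by positivity) (hP0 z)),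
          ← ENNReal.ofReal_mul hM0, ← one_add_mul]
        exact ENNReal.ofReal_le_ofReal
          (inv_norm_sq_mul_heatGaussian_mul_heatGaussian_le hτ hs hx0 y z)
    _ = ENNReal.ofReal M * ((∫⁻ z, ENNReal.ofReal (P z)) +
          ∫⁻ z, ENNReal.ofReal ((τ + s) * (‖z‖ ^ 2)⁻¹ * P z)) := by
        rw [lintegral_const_mul _ (by fun_prop), lintegral_add_left (by fun_prop)]
    _ ≤ ENNReal.ofReal M * (ENNReal.ofReal (K * G) + ENNReal.ofReal (C * G)) := by
        gcongr
        exact hsing hτ hs x y hx hy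
    _ = _ := by
        rw [← ENNReal.ofReal_add (by positivity) (by positivity), ← ENNReal.ofReal_mul hM0]
        congr 1
        rw [hM, hG]
        ring

end Duhamel

theorem duhamel_heat_difference_general {E : Type*} [NormedAddCommGroup E] [InnerProductSpace ℝ E]
    [FiniteDimensional ℝ E] [MeasurableSpace E] [BorelSpace E] (hE : 3 ≤ Module.finrank ℝ E) :
    ∃ C : ℝ, 0 < C ∧ ∀ t : ℝ, 0 < t → ∀ x y : E, √t ≤ ‖x‖ → √t ≤ ‖y‖ →
      (∫⁻ s in Set.Ioo (0 : ℝ) t, ∫⁻ z, ENNReal.ofReal (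
          (t - s) ^ (-(Module.finrank ℝ E : ℝ) / 2) * Real.exp (-‖x - z‖ ^ 2 / (4 * (t - s))) *
            (1 / ‖z‖ ^ 2) * s ^ (-(Module.finrank ℝ E : ℝ) / 2) *
              Real.exp (-‖z - y‖ ^ 2 / (4 * s)))) ≤
      ENNReal.ofReal (C * t ^ (-(Module.finrank ℝ E : ℝ) / 2) *
        Real.exp (-‖x - y‖ ^ 2 / (16 * t)) * (t / (‖x‖ + ‖y‖) ^ 2)) := by
  obtain ⟨C, hC, hbound⟩ := exists_lintegral_inv_norm_sq_mul_heatGaussian_le hE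
  refine ⟨C, hC, fun t ht x y hx hy ↦ ?_⟩
  set Q := C * t ^ (-(Module.finrank ℝ E : ℝ) / 2) * Real.exp (-‖x - y‖ ^ 2 / (16 * t)) /
    (‖x‖ + ‖y‖) ^ 2 with hQ
  calc _ ≤ ∫⁻ _ in Set.Ioo (0 : ℝ) t, ENNReal.ofReal Q := by
        refine setLIntegral_mono measurable_const fun s ⟨hs, hst⟩ ↦ ?_
        have hslice := hbound (sub_pos.mpr hst) hs x y
        rw [sub_add_cancel] at hslice
        refine le_trans (le_of_eq ?_) (hslice hx hy)
        congr! 3 with z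
        simp only [heatGaussian]
        ring
    _ = ENNReal.ofReal (Q * t) := by
        rw [setLIntegral_const, Real.volume_Ioo, sub_zero, ← ENNReal.ofReal_mul (by positivity)]
    _ = _ := by
        rw [hQ]
        ring_nf

/-- Duhamel bound for the difference of heat kernels: for `d ≥ 3` there is `C` such
that for `t > 0` and `|x|, |y| ≥ √t`,
`∫₀^t ∫ (t-s)^{-d/2} e^{-|x-z|²/(4(t-s))} |z|^{-2} s^{-d/2} e^{-|z-y|²/(4s)} dz ds
 ≤ C t^{-d/2} e^{-|x-y|²/(16t)} · t/(|x|+|y|)²`. -/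
theorem duhamel_heat_difference (d : ℕ) (hd : 3 ≤ d) :
    ∃ C : ℝ, 0 < C ∧ ∀ t : ℝ, 0 < t →
      ∀ x y : EuclideanSpace ℝ (Fin d), Real.sqrt t ≤ ‖x‖ → Real.sqrt t ≤ ‖y‖ →
      (∫⁻ s in Set.Ioo (0 : ℝ) t, ∫⁻ z, ENNReal.ofReal (
          (t - s) ^ (-(d : ℝ) / 2) * Real.exp (-‖x - z‖ ^ 2 / (4 * (t - s))) *
            (1 / ‖z‖ ^ 2) * s ^ (-(d : ℝ) / 2) * Real.exp (-‖z - y‖ ^ 2 / (4 * s)))) ≤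
      ENNReal.ofReal (C * t ^ (-(d : ℝ) / 2) * Real.exp (-‖x - y‖ ^ 2 / (16 * t)) *
        (t / (‖x‖ + ‖y‖) ^ 2)) := by
  simpa only [finrank_euclideanSpace_fin] using duhamel_heat_difference_general
    (E := EuclideanSpace ℝ (Fin d)) (by rwa [finrank_euclideanSpace_fin])
end

section
/- Let $\mu \ge 1$ be an integer, set $j = 3\mu$, let $0 < r \le R$, and let $A > 0$. Let $\varphi : \mathbb{R} \to [0,1]$ be a smooth even function supported in $[-\tfrac12, \tfrac12]$ with $\varphi(\tau) = 1$ for $|\tau| \le \tfrac14$, and define $\check{\varphi}_R(\lambda) = \tfrac{1}{2\pi}\int_{\mathbb{R}} e^{i\lambda\tau} \varphi(\tau/R)\,d\tau$. Let $a : \mathbb{R} \to \mathbb{C}$ be even, continuous with $a(0) = 0$, $j$ times continuously differentiable on $\mathbb{R}\setminus\{0\}$, and satisfy $|a^{(i)}(\lambda)| \le A\, |\lambda|^{-i} \left(\min(1, r|\lambda|)\right)^{2\mu}$ for all $\lambda \ne 0$ and all $0 \le i \le j$. Then there is a constant $C$ depending only on $\mu$ and $\varphi$ such that the function $a_2 :=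 a * \check{\varphi}_R - a$ satisfies $|a_2(\lambda)| \le C A \left(\frac{\min(1, r|\lambda|)}{|\lambda| R}\right)^{2\mu} \left(1 + R^2\lambda^2\right)^{\frac{2\mu - j}{2}}$ for all $\lambda \ne 0$. -/
open MeasureTheory

/-!
Since `φ = 1` near the origin, the kernel `ψ = φ̌_1` has mass one and all its higher moments vanish,
so `ψ_R` convolved with the Taylor polynomial of `a` at `l` of degree `j - 1` gives back `a l`. The
Taylor remainder of `a` at `y` is at most a constant times
`A * min 1 (r * |l|) ^ n * (|y - l| / |l|) ^ j` for *every* `y ≠ 0`: when `|y - l| ≤ |l| / 2` the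
segment from `l` to `y` avoids the singularity of `a`, and when `|y - l| ≥ |l| / 2` both `a y` and
the Taylor polynomial already satisfy this bound. Convolving with `ψ_R` gains `(|l| * R) ^ (-j)`,
which is the claim when `1 ≤ |l| * R`. When `|l| * R ≤ 1` there is no cancellation to exploit, and
both terms are bounded separately through `min 1 (q * x) ≤ q * min 1 x` for `1 ≤ q`.
-/

open scoped FourierTransform SchwartzMap Topology

section Taylor

open scoped Nat

variable {E : Type*} [NormedAddCommGroup E] [NormedSpace ℝ E]

theorem norm_sub_taylorWithinEval_le {f : ℝ → E} {s : Set ℝ} {x₀ x C : ℝ} {n : ℕ}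
    (hs : UniqueDiffOn ℝ s) (hsub : Set.uIcc x₀ x ⊆ s) (hf : ContDiffOn ℝ (n + 1) f s)
    (hC : ∀ y ∈ Set.uIcc x₀ x, ‖iteratedDerivWithin (n + 1) f s y‖ ≤ C) :
    ‖f x - taylorWithinEval f n s x₀ x‖ ≤ C * |x - x₀| ^ (n + 1) / n ! := by
  have hderiv : ∀ y ∈ Set.uIcc x₀ x, HasDerivWithinAt (fun t => taylorWithinEval f n s t x)
      (((n ! : ℝ)⁻¹ * (x - y) ^ n) • iteratedDerivWithin (n + 1) f s y) (Set.uIcc x₀ x) y :=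
    fun y hy => (hasDerivWithinAt_taylorWithinEval hs self_mem_nhdsWithin (hsub hy) subset_rfl
      hf.of_succ (hf.differentiableOn_iteratedDerivWithin (mod_cast n.lt_succ_self) hs y
        (hsub hy))).mono hsub
  have hbound : ∀ y ∈ Set.uIcc x₀ x,
      ‖((n ! : ℝ)⁻¹ * (x - y) ^ n) • iteratedDerivWithin (n + 1) f s y‖ ≤
        (n ! : ℝ)⁻¹ * |x - x₀| ^ n * C := by
    intro y hy
    have hxy : |x - y| ≤ |x - x₀| := Set.abs_sub_right_of_mem_uIcc hy
    rw [norm_smul, norm_mul, norm_inv, norm_pow, RCLike.norm_natCast, Real.norm_eq_abs]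
    gcongr
    exact hC y hy
  have hmean := (convex_uIcc x₀ x).norm_image_sub_le_of_norm_hasDerivWithin_le hderiv hbound
    Set.left_mem_uIcc Set.right_mem_uIcc
  rw [taylorWithinEval_self, Real.norm_eq_abs] at hmean
  exact hmean.trans_eq (by ring)

end Taylor

theorem min_one_mul_le_mul_min_one {q r x y : ℝ} (hq : 1 ≤ q) (hr : 0 ≤ r) (h : y ≤ q * x) :
    min 1 (r * y) ≤ q * min 1 (r * x) := by
  rw [mul_min_of_nonneg _ _ (by positivity), mul_one, mul_left_comm]
  gcongr

theorem inv_max_one_pow_le {x : ℝ} (hx : 0 ≤ x) (k : ℕ) :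
    (max 1 x ^ k)⁻¹ ≤ 2 ^ k * (1 + x ^ 2) ^ (-(k : ℝ) / 2) := by
  have hpos : 0 < max 1 x := lt_max_of_lt_left one_pos
  have hsq : 1 + x ^ 2 ≤ (2 * max 1 x) ^ 2 := by
    nlinarith [le_max_left 1 x, le_max_right 1 x]
  have hpow : (1 + x ^ 2) ^ ((k : ℝ) / 2) ≤ (2 * max 1 x) ^ k := by
    calc (1 + x ^ 2) ^ ((k : ℝ) / 2) ≤ ((2 * max 1 x) ^ 2) ^ ((k : ℝ) / 2) := by gcongr
      _ = (2 * max 1 x) ^ k := by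
        rw [← Real.rpow_natCast_mul (by positivity), ← Real.rpow_natCast]
        congr 1
        push_cast
        ring
  rw [neg_div, Real.rpow_neg (by positivity), ← div_eq_mul_inv, inv_le_comm₀ (by positivity)
    (by positivity), inv_div, div_le_iff₀ (by positivity), ← mul_pow, mul_comm]
  exact hpow

/-- `a` is a symbol on `ℝ \ {0}` of smoothness `j`, of size `A` and vanishing to order `n` at the
origin on the scale `|l| ≤ r⁻¹`; the paper's `a` is the case `n = 2μ`, `j = 3μ`. -/
structure IsTruncatedSymbol {E : Type*} [NormedAddCommGroup E] [NormedSpace ℝ E] (a : ℝ → E)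
    (n j : ℕ) (r A : ℝ) : Prop where
  contDiffOn : ContDiffOn ℝ j a {0}ᶜ
  norm_iteratedDeriv_le : ∀ l : ℝ, l ≠ 0 → ∀ i ≤ j,
    ‖iteratedDeriv i a l‖ ≤ A * min 1 (r * |l|) ^ n / |l| ^ i

namespace IsTruncatedSymbol

open scoped Nat

variable {E : Type*} [NormedAddCommGroup E] [NormedSpace ℝ E] {a : ℝ → E} {n j : ℕ}
  {r A l y q : ℝ}

theorem of_norm_iteratedDeriv_le_rpow (hsmooth : ContDiffOn ℝ j a {0}ᶜ)
    (hderiv : ∀ l : ℝ, l ≠ 0 → ∀ i : ℕ, i ≤ j →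
      ‖iteratedDeriv i a l‖ ≤ A * |l| ^ (-(i : ℝ)) * min 1 (r * |l|) ^ n) :
    IsTruncatedSymbol a n j r A := by
  refine ⟨hsmooth, fun l hl i hi => (hderiv l hl i hi).trans_eq ?_⟩
  rw [Real.rpow_neg (abs_nonneg l), Real.rpow_natCast, mul_right_comm, div_eq_mul_inv]

theorem nonneg (ha : IsTruncatedSymbol a n j r A) (hr : 0 < r) : 0 ≤ A := by
  have h := ha.norm_iteratedDeriv_le 1 one_ne_zero 0 j.zero_le
  rw [abs_one, mul_one, pow_zero, div_one] at h
  exact nonneg_of_mul_nonneg_left ((norm_nonneg _).trans h) (by positivity)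

theorem norm_iteratedDeriv_le_of_abs_le (ha : IsTruncatedSymbol a n j r A) (hr : 0 < r)
    (hy : y ≠ 0) (hq : 1 ≤ q) (hyl : |y| ≤ q * |l|) {i : ℕ} (hi : i ≤ j) :
    ‖iteratedDeriv i a y‖ ≤ A * (q * min 1 (r * |l|)) ^ n / |y| ^ i := by
  have hA := ha.nonneg hr
  refine (ha.norm_iteratedDeriv_le y hy i hi).trans ?_
  gcongr
  exact min_one_mul_le_mul_min_one hq hr.le hyl

theorem norm_le_of_abs_le (ha : IsTruncatedSymbol a n j r A) (hr : 0 < r)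
    (hy : y ≠ 0) (hq : 1 ≤ q) (hyl : |y| ≤ q * |l|) :
    ‖a y‖ ≤ A * (q * min 1 (r * |l|)) ^ n := by
  simpa using ha.norm_iteratedDeriv_le_of_abs_le hr hy hq hyl j.zero_le

theorem norm_le (ha : IsTruncatedSymbol a n j r A) (hr : 0 < r) (hy : y ≠ 0) : ‖a y‖ ≤ A := by
  refine (ha.norm_le_of_abs_le hr hy le_rfl (one_mul _).ge).trans
    (mul_le_of_le_one_right (ha.nonneg hr) ?_)
  rw [one_mul]
  exact pow_le_one₀ (by positivity) (min_le_left _ _)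

theorem norm_taylorWithinEval_le {N : ℕ} (ha : IsTruncatedSymbol a n (N + 1) r A) (hr : 0 < r)
    (hl : l ≠ 0) :
    ‖taylorWithinEval a N {0}ᶜ l y‖ ≤
      (N + 1) * (A * min 1 (r * |l|) ^ n * (1 + |y - l| / |l|) ^ (N + 1)) := by
  have hA := ha.nonneg hr
  have hterm : ∀ k ∈ Finset.range (N + 1),
      ‖((k ! : ℝ)⁻¹ * (y - l) ^ k) • iteratedDerivWithin k a {0}ᶜ l‖ ≤
        A * min 1 (r * |l|) ^ n * (1 + |y - l| / |l|) ^ (N + 1) := by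
    intro k hk
    have hk' : k ≤ N + 1 := (Finset.mem_range.1 hk).le
    have hfac : (k ! : ℝ)⁻¹ ≤ 1 := inv_le_one_of_one_le₀ (mod_cast k.factorial_pos)
    rw [iteratedDerivWithin_of_isOpen isOpen_compl_singleton hl, norm_smul, norm_mul, norm_inv,
      norm_pow, RCLike.norm_natCast, Real.norm_eq_abs]
    calc (k ! : ℝ)⁻¹ * |y - l| ^ k * ‖iteratedDeriv k a l‖
        ≤ 1 * |y - l| ^ k * (A * min 1 (r * |l|) ^ n / |l| ^ k) := by
          gcongr
          exact ha.norm_iteratedDeriv_le l hl k hk'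
      _ = A * min 1 (r * |l|) ^ n * (|y - l| / |l|) ^ k := by rw [div_pow]; ring
      _ ≤ A * min 1 (r * |l|) ^ n * (1 + |y - l| / |l|) ^ k := by gcongr; linarith
      _ ≤ A * min 1 (r * |l|) ^ n * (1 + |y - l| / |l|) ^ (N + 1) := by
          gcongr
          exact le_add_of_nonneg_right (by positivity)
  rw [taylor_within_apply]
  simpa using norm_sum_le_of_le _ hterm

theorem norm_sub_taylorWithinEval_le_of_near {N : ℕ} (ha : IsTruncatedSymbol a n (N + 1) r A)
    (hr : 0 < r) (hl : l ≠ 0) (hn : n ≤ N + 1) (hyl : |y - l| ≤ |l| / 2) :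
    ‖a y - taylorWithinEval a N {0}ᶜ l y‖ ≤
      4 ^ (N + 1) * (A * min 1 (r * |l|) ^ n * (|y - l| / |l|) ^ (N + 1)) := by
  have hA := ha.nonneg hr
  have hl' : 0 < |l| := abs_pos.2 hl
  have hdist : ∀ z ∈ Set.uIcc l y, |l| / 2 ≤ |z| ∧ |z| ≤ 2 * |l| := by
    intro z hz
    have hzl := (Set.abs_sub_left_of_mem_uIcc hz).trans hyl
    have hlower := abs_sub_abs_le_abs_sub l z
    have hupper := abs_sub_abs_le_abs_sub z l
    rw [abs_sub_comm] at hlower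
    constructor <;> linarith
  have hne : ∀ z ∈ Set.uIcc l y, z ≠ 0 := fun z hz =>
    abs_pos.1 ((half_pos hl').trans_le (hdist z hz).1)
  have hderiv : ∀ z ∈ Set.uIcc l y, ‖iteratedDerivWithin (N + 1) a {0}ᶜ z‖ ≤
      4 ^ (N + 1) * (A * min 1 (r * |l|) ^ n) / |l| ^ (N + 1) := by
    intro z hz
    rw [iteratedDerivWithin_of_isOpen isOpen_compl_singleton (hne z hz)]
    calc ‖iteratedDeriv (N + 1) a z‖
        ≤ A * (2 * min 1 (r * |l|)) ^ n / |z| ^ (N + 1) :=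
          ha.norm_iteratedDeriv_le_of_abs_le hr (hne z hz) one_le_two (hdist z hz).2 le_rfl
      _ ≤ A * (2 ^ (N + 1) * min 1 (r * |l|) ^ n) / (|l| / 2) ^ (N + 1) := by
          rw [mul_pow]
          gcongr
          · exact one_le_two
          · exact (hdist z hz).1
      _ = 4 ^ (N + 1) * (A * min 1 (r * |l|) ^ n) / |l| ^ (N + 1) := by
          rw [show (4 : ℝ) = 2 * 2 by norm_num, mul_pow, div_pow]
          field_simp
  have hfac : (1 : ℝ) ≤ N ! := mod_cast N.factorial_pos
  calc ‖a y - taylorWithinEval a N {0}ᶜ l y‖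
      ≤ 4 ^ (N + 1) * (A * min 1 (r * |l|) ^ n) / |l| ^ (N + 1) * |y - l| ^ (N + 1) / N ! :=
        norm_sub_taylorWithinEval_le isOpen_compl_singleton.uniqueDiffOn hne
          (mod_cast ha.contDiffOn) hderiv
    _ ≤ 4 ^ (N + 1) * (A * min 1 (r * |l|) ^ n) / |l| ^ (N + 1) * |y - l| ^ (N + 1) :=
        div_le_self (by positivity) hfac
    _ = 4 ^ (N + 1) * (A * min 1 (r * |l|) ^ n * (|y - l| / |l|) ^ (N + 1)) := by
        rw [div_pow]
        ring

theorem norm_sub_taylorWithinEval_le_of_far {N : ℕ} (ha : IsTruncatedSymbol a n (N + 1) r A)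
    (hr : 0 < r) (hl : l ≠ 0) (hy : y ≠ 0) (hn : n ≤ N + 1) (hyl : |l| / 2 ≤ |y - l|) :
    ‖a y - taylorWithinEval a N {0}ᶜ l y‖ ≤
      (N + 2) * 3 ^ (N + 1) * (A * min 1 (r * |l|) ^ n * (|y - l| / |l|) ^ (N + 1)) := by
  have hA := ha.nonneg hr
  have hl' : 0 < |l| := abs_pos.2 hl
  set q := |y - l| / |l| with hq
  have hone : 1 ≤ 1 + q := le_add_of_nonneg_right (by positivity)
  have hqthree : 1 + q ≤ 3 * q := by
    have : 1 / 2 ≤ q := by rw [hq, le_div_iff₀ hl']; linarith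
    linarith
  have habs : |y| ≤ (1 + q) * |l| := by
    rw [hq, add_mul, div_mul_cancel₀ _ hl'.ne', one_mul]
    simpa using abs_add_le l (y - l)
  have hself : ‖a y‖ ≤ A * min 1 (r * |l|) ^ n * (1 + q) ^ (N + 1) := by
    calc ‖a y‖ ≤ A * ((1 + q) * min 1 (r * |l|)) ^ n := ha.norm_le_of_abs_le hr hy hone habs
      _ = A * min 1 (r * |l|) ^ n * (1 + q) ^ n := by rw [mul_pow]; ring
      _ ≤ A * min 1 (r * |l|) ^ n * (1 + q) ^ (N + 1) := by gcongr
  calc ‖a y - taylorWithinEval a N {0}ᶜ l y‖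
      ≤ A * min 1 (r * |l|) ^ n * (1 + q) ^ (N + 1) +
          (N + 1) * (A * min 1 (r * |l|) ^ n * (1 + q) ^ (N + 1)) :=
        norm_sub_le_of_le hself (ha.norm_taylorWithinEval_le hr hl)
    _ = (N + 2) * (A * min 1 (r * |l|) ^ n * (1 + q) ^ (N + 1)) := by ring
    _ ≤ (N + 2) * (A * min 1 (r * |l|) ^ n * (3 * q) ^ (N + 1)) := by gcongr
    _ = (N + 2) * 3 ^ (N + 1) * (A * min 1 (r * |l|) ^ n * q ^ (N + 1)) := by
        rw [mul_pow]
        ring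

theorem norm_sub_taylorWithinEval_le {N : ℕ} (ha : IsTruncatedSymbol a n (N + 1) r A)
    (hr : 0 < r) (hl : l ≠ 0) (hy : y ≠ 0) (hn : n ≤ N + 1) :
    ‖a y - taylorWithinEval a N {0}ᶜ l y‖ ≤
      (N + 2) * 4 ^ (N + 1) * (A * min 1 (r * |l|) ^ n * (|y - l| / |l|) ^ (N + 1)) := by
  have hA := ha.nonneg hr
  rcases le_total |y - l| (|l| / 2) with hnear | hfar
  · refine (ha.norm_sub_taylorWithinEval_le_of_near hr hl hn hnear).trans ?_
    gcongr
    exact le_mul_of_one_le_left (by positivity) (by linarith [N.cast_nonneg (α := ℝ)])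
  · refine (ha.norm_sub_taylorWithinEval_le_of_far hr hl hy hn hfar).trans ?_
    gcongr
    norm_num

end IsTruncatedSymbol

/-- `ψ` is an approximate identity kernel of order `j`: it has `j` finite absolute moments, and its
moments of order `< j` are those of the Dirac mass at `0`. -/
structure IsKernelOfOrder (ψ : ℝ → ℂ) (j : ℕ) : Prop where
  integrable_pow_mul : ∀ k ≤ j, Integrable fun x : ℝ => (x : ℂ) ^ k * ψ x
  integral_pow_mul : ∀ k < j, ∫ x : ℝ, (x : ℂ) ^ k * ψ x = 0 ^ k

/-- The `L¹`-normalised dilate `ψ_c(x) = c ψ(c x)`, concentrating at the origin as `c → ∞`. -/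
def dilate (c : ℝ) (ψ : ℝ → ℂ) (x : ℝ) : ℂ := c * ψ (c * x)

/-- The weighted `L¹` norm `∫ (1 + |x|)ʲ |ψ(x)| dx`, which enters the remainder bounds as the only
constant depending on the kernel. -/
noncomputable def weightedL1Norm (ψ : ℝ → ℂ) (j : ℕ) : ℝ := ∫ x : ℝ, (1 + |x|) ^ j * ‖ψ x‖

theorem weightedL1Norm_nonneg (ψ : ℝ → ℂ) (j : ℕ) : 0 ≤ weightedL1Norm ψ j :=
  integral_nonneg fun _ => by positivity

theorem integral_dilate_smul {E : Type*} [NormedAddCommGroup E] [NormedSpace ℂ E]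
    (ψ : ℝ → ℂ) (a : ℝ → E) {R : ℝ} (hR : 0 < R) (l : ℝ) :
    ∫ θ, dilate R ψ (l - θ) • a θ = ∫ x, ψ x • a (l - x / R) := by
  calc ∫ θ, dilate R ψ (l - θ) • a θ
      = ∫ u, dilate R ψ u • a (l - u) := by
        rw [← integral_sub_left_eq_self _ volume l]
        simp_rw [sub_sub_cancel]
    _ = (R : ℂ) • ∫ u, ψ (R * u) • a (l - R * u / R) := by
        simp_rw [dilate, mul_smul, mul_div_cancel_left₀ _ hR.ne']
        exact integral_smul _ _
    _ = ∫ x, ψ x • a (l - x / R) := by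
        rw [Measure.integral_comp_mul_left (fun x => ψ x • a (l - x / R)),
          abs_of_pos (by positivity), Complex.coe_smul, smul_inv_smul₀ hR.ne']

namespace IsKernelOfOrder

variable {ψ : ℝ → ℂ} {j : ℕ}

theorem integrable (hψ : IsKernelOfOrder ψ j) : Integrable ψ := by
  simpa using hψ.integrable_pow_mul 0 j.zero_le

theorem integrable_weight_mul_norm (hψ : IsKernelOfOrder ψ j) :
    Integrable fun x : ℝ => (1 + |x|) ^ j * ‖ψ x‖ := by
  simp_rw [add_pow, one_pow, one_mul, Finset.sum_mul]
  refine integrable_finsetSum _ fun k _ => ?_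
  convert! (hψ.integrable_pow_mul (j - k) (j.sub_le k)).norm.const_mul (j.choose k : ℝ)
    using 2 with x
  simp only [Complex.norm_mul, norm_pow, Complex.norm_real, Real.norm_eq_abs]
  ring

protected theorem dilate (hψ : IsKernelOfOrder ψ j) {c : ℝ} (hc : 0 < c) :
    IsKernelOfOrder (dilate c ψ) j := by
  have hc' : (c : ℂ) ≠ 0 := Complex.ofReal_ne_zero.2 hc.ne'
  have hrescale : ∀ k : ℕ, (fun x : ℝ => (x : ℂ) ^ k * dilate c ψ x) =
      fun x : ℝ => (c : ℂ) / c ^ k * (((c * x : ℝ) : ℂ) ^ k * ψ (c * x)) := by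
    intro k
    ext x
    rw [dilate]
    push_cast
    rw [mul_pow]
    field_simp
  constructor
  · intro k hk
    rw [hrescale]
    exact ((hψ.integrable_pow_mul k hk).comp_mul_left' hc.ne').const_mul _
  · intro k hk
    rw [hrescale, integral_const_mul,
      Measure.integral_comp_mul_left (fun x : ℝ => (x : ℂ) ^ k * ψ x), hψ.integral_pow_mul k hk]
    rcases k.eq_zero_or_pos with rfl | hk0
    · simp [abs_of_pos hc, hc']
    · simp [hk0.ne']

end IsKernelOfOrder

theorem sub_div_ne_zero {l x R : ℝ} (hR : R ≠ 0) (hx : x ≠ R * l) : l - x / R ≠ 0 :=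
  sub_ne_zero.2 fun h => hx (by rw [h, mul_div_cancel₀ _ hR])

section Remainder

open scoped Nat

variable {E : Type*} [NormedAddCommGroup E] [NormedSpace ℂ E] {ψ : ℝ → ℂ} {a : ℝ → E}
  {n j N : ℕ} {r R A l : ℝ}

theorem smul_taylorWithinEval_sub_div (z : ℂ) (a : ℝ → E) (N : ℕ) (s : Set ℝ) (l R x : ℝ) :
    z • taylorWithinEval a N s l (l - x / R) = ∑ k ∈ Finset.range (N + 1),
      ((x : ℂ) ^ k * z) • ((k ! : ℝ)⁻¹ * (-R⁻¹) ^ k) • iteratedDerivWithin k a s l := by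
  rw [taylor_within_apply, Finset.smul_sum]
  refine Finset.sum_congr rfl fun k _ => ?_
  simp only [← Complex.coe_smul, smul_smul]
  congr 1
  push_cast
  ring

theorem IsKernelOfOrder.integrable_smul_taylorWithinEval (hψ : IsKernelOfOrder ψ (N + 1))
    (a : ℝ → E) (s : Set ℝ) (l R : ℝ) :
    Integrable fun x : ℝ => ψ x • taylorWithinEval a N s l (l - x / R) := by
  simp_rw [smul_taylorWithinEval_sub_div]
  exact integrable_finsetSum _ fun k hk =>
    (hψ.integrable_pow_mul k (Finset.mem_range.1 hk).le).smul_const _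

theorem IsKernelOfOrder.integral_smul_taylorWithinEval [CompleteSpace E]
    (hψ : IsKernelOfOrder ψ (N + 1)) (a : ℝ → E) (s : Set ℝ) (l R : ℝ) :
    ∫ x : ℝ, ψ x • taylorWithinEval a N s l (l - x / R) = a l := by
  simp_rw [smul_taylorWithinEval_sub_div]
  rw [integral_finsetSum _ fun k hk =>
    (hψ.integrable_pow_mul k (Finset.mem_range.1 hk).le).smul_const _]
  calc ∑ k ∈ Finset.range (N + 1), ∫ x : ℝ,
        ((x : ℂ) ^ k * ψ x) • ((k ! : ℝ)⁻¹ * (-R⁻¹) ^ k) • iteratedDerivWithin k a s l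
      = ∑ k ∈ Finset.range (N + 1),
          (0 ^ k : ℂ) • ((k ! : ℝ)⁻¹ * (-R⁻¹) ^ k) • iteratedDerivWithin k a s l :=
        Finset.sum_congr rfl fun k hk => by
          rw [integral_smul_const, hψ.integral_pow_mul k (Finset.mem_range.1 hk)]
    _ = a l := by simp [Finset.sum_range_succ']

theorem IsTruncatedSymbol.integrable_smul (ha : IsTruncatedSymbol a n j r A) (hr : 0 < r)
    (hψ : Integrable ψ) (l : ℝ) (hR : R ≠ 0) : Integrable fun x => ψ x • a (l - x / R) := by
  have hmeas : AEStronglyMeasurable (fun x => a (l - x / R)) := by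
    rw [← restrict_compl_singleton (μ := volume) (R * l)]
    refine (ha.contDiffOn.continuousOn.comp (by fun_prop) fun x hx => ?_).aestronglyMeasurable
      (measurableSet_singleton _).compl
    exact sub_div_ne_zero hR hx
  refine hψ.smul_bdd A hmeas ?_
  filter_upwards [Measure.ae_ne volume (R * l)] with x hx
  exact ha.norm_le hr (sub_div_ne_zero hR hx)

theorem IsTruncatedSymbol.norm_integral_smul_sub_le_weightedL1Norm_div_pow [CompleteSpace E]
    (ha : IsTruncatedSymbol a n (N + 1) r A) (hψ : IsKernelOfOrder ψ (N + 1)) (hr : 0 < r)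
    (hR : 0 < R) (hn : n ≤ N + 1) (hl : l ≠ 0) :
    ‖(∫ x, ψ x • a (l - x / R)) - a l‖ ≤
      (N + 2) * 4 ^ (N + 1) * weightedL1Norm ψ (N + 1) *
        (A * min 1 (r * |l|) ^ n / (|l| * R) ^ (N + 1)) := by
  have hA := ha.nonneg hr
  have hbound : ∀ᵐ x : ℝ,
      ‖ψ x • a (l - x / R) - ψ x • taylorWithinEval a N {0}ᶜ l (l - x / R)‖ ≤
        (N + 2) * 4 ^ (N + 1) * (A * min 1 (r * |l|) ^ n / (|l| * R) ^ (N + 1)) *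
          ((1 + |x|) ^ (N + 1) * ‖ψ x‖) := by
    filter_upwards [Measure.ae_ne volume (R * l)] with x hx
    rw [← smul_sub, norm_smul]
    calc ‖ψ x‖ * ‖a (l - x / R) - taylorWithinEval a N {0}ᶜ l (l - x / R)‖
        ≤ ‖ψ x‖ * ((N + 2) * 4 ^ (N + 1) *
            (A * min 1 (r * |l|) ^ n * (|l - x / R - l| / |l|) ^ (N + 1))) := by
          gcongr
          exact ha.norm_sub_taylorWithinEval_le hr hl (sub_div_ne_zero hR.ne' hx) hn
      _ = (N + 2) * 4 ^ (N + 1) * (A * min 1 (r * |l|) ^ n / (|l| * R) ^ (N + 1)) *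
            (|x| ^ (N + 1) * ‖ψ x‖) := by
          rw [sub_sub_cancel_left, abs_neg, abs_div, abs_of_pos hR, div_div, div_pow, mul_comm R]
          ring
      _ ≤ _ := by
          gcongr
          linarith
  rw [← hψ.integral_smul_taylorWithinEval a {0}ᶜ l R, ← integral_sub
    (ha.integrable_smul hr hψ.integrable l hR.ne') (hψ.integrable_smul_taylorWithinEval ..)]
  refine (norm_integral_le_of_norm_le (hψ.integrable_weight_mul_norm.const_mul _)
    hbound).trans_eq ?_
  rw [integral_const_mul, ← weightedL1Norm]
  ring

theorem IsTruncatedSymbol.norm_integral_smul_sub_le_of_le_one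
    (ha : IsTruncatedSymbol a n j r A) (hψ : IsKernelOfOrder ψ j) (hr : 0 < r) (hR : 0 < R)
    (hn : n ≤ j) (hl : l ≠ 0) (hlR : |l| * R ≤ 1) :
    ‖(∫ x, ψ x • a (l - x / R)) - a l‖ ≤
      (weightedL1Norm ψ j + 1) * (A * (min 1 (r * |l|) / (|l| * R)) ^ n) := by
  have hA := ha.nonneg hr
  set ε := min 1 (r * |l|) / (|l| * R) with hε
  have hself : ‖a l‖ ≤ A * ε ^ n := by
    have := ha.norm_le_of_abs_le hr hl (one_le_inv_iff₀.2 ⟨by positivity, hlR⟩)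
      (le_mul_of_one_le_left (abs_nonneg l) (one_le_inv_iff₀.2 ⟨by positivity, hlR⟩))
    rwa [inv_mul_eq_div] at this
  have hbound : ∀ᵐ x : ℝ, ‖ψ x • a (l - x / R)‖ ≤ A * ε ^ n * ((1 + |x|) ^ j * ‖ψ x‖) := by
    filter_upwards [Measure.ae_ne volume (R * l)] with x hx
    have hq : 1 ≤ (1 + |x|) / (|l| * R) :=
      (one_le_div (by positivity)).2 (hlR.trans (le_add_of_nonneg_right (abs_nonneg x)))
    have habs : |l - x / R| ≤ (1 + |x|) / (|l| * R) * |l| := by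
      calc |l - x / R| ≤ |l| + |x| / R := by
            simpa [abs_div, abs_of_pos hR] using abs_sub l (x / R)
        _ = (|l| * R + |x|) / R := by field_simp
        _ ≤ (1 + |x|) / R := by gcongr
        _ = (1 + |x|) / (|l| * R) * |l| := by field_simp
    rw [norm_smul, mul_comm]
    calc ‖a (l - x / R)‖ * ‖ψ x‖
        ≤ A * ((1 + |x|) / (|l| * R) * min 1 (r * |l|)) ^ n * ‖ψ x‖ := by
          gcongr
          exact ha.norm_le_of_abs_le hr (sub_div_ne_zero hR.ne' hx) hq habs
      _ = A * ε ^ n * ((1 + |x|) ^ n * ‖ψ x‖) := by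
          rw [hε, div_mul_eq_mul_div, mul_div_assoc, mul_pow]
          ring
      _ ≤ A * ε ^ n * ((1 + |x|) ^ j * ‖ψ x‖) := by
          gcongr
          exact le_add_of_nonneg_right (abs_nonneg x)
  have hconv : ‖∫ x, ψ x • a (l - x / R)‖ ≤ A * ε ^ n * weightedL1Norm ψ j := by
    rw [weightedL1Norm, ← integral_const_mul]
    exact norm_integral_le_of_norm_le (hψ.integrable_weight_mul_norm.const_mul _) hbound
  exact (norm_sub_le_of_le hconv hself).trans_eq (by ring)

theorem IsTruncatedSymbol.norm_integral_smul_sub_le [CompleteSpace E]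
    (ha : IsTruncatedSymbol a n (N + 1) r A) (hψ : IsKernelOfOrder ψ (N + 1)) (hr : 0 < r)
    (hR : 0 < R) (hn : n ≤ N + 1) (hl : l ≠ 0) :
    ‖(∫ x, ψ x • a (l - x / R)) - a l‖ ≤
      (N + 2) * 4 ^ (N + 1) * (weightedL1Norm ψ (N + 1) + 1) *
        (A * (min 1 (r * |l|) / (|l| * R)) ^ n * (max 1 (|l| * R) ^ (N + 1 - n))⁻¹) := by
  have hA := ha.nonneg hr
  have hnorm := weightedL1Norm_nonneg ψ (N + 1)
  rcases le_total (|l| * R) 1 with hle | hge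
  · have hconst : (1 : ℝ) ≤ (N + 2) * 4 ^ (N + 1) :=
      one_le_mul_of_one_le_of_one_le (by linarith [N.cast_nonneg (α := ℝ)])
        (one_le_pow₀ (by norm_num))
    rw [max_eq_left hle, one_pow, inv_one, mul_one]
    refine (ha.norm_integral_smul_sub_le_of_le_one hψ hr hR hn hl hle).trans ?_
    gcongr
    exact le_mul_of_one_le_left (by positivity) hconst
  · have hsplit : min 1 (r * |l|) ^ n / (|l| * R) ^ (N + 1) =
        (min 1 (r * |l|) / (|l| * R)) ^ n * ((|l| * R) ^ (N + 1 - n))⁻¹ := by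
      rw [← pow_mul_pow_sub _ hn, div_pow, div_mul_eq_div_div, div_eq_mul_inv (_ / _)]
    rw [max_eq_right hge, mul_assoc A, ← hsplit, ← mul_div_assoc]
    refine (ha.norm_integral_smul_sub_le_weightedL1Norm_div_pow hψ hr hR hn hl).trans ?_
    gcongr
    exact le_add_of_nonneg_right zero_le_one

theorem IsKernelOfOrder.exists_norm_integral_dilate_smul_sub_le [CompleteSpace E] {j : ℕ}
    (hψ : IsKernelOfOrder ψ j) (hj : 0 < j) (hn : n ≤ j) :
    ∃ C : ℝ, 0 < C ∧ ∀ r R A : ℝ, 0 < r → 0 < R → ∀ a : ℝ → E, IsTruncatedSymbol a n j r A →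
      ∀ l : ℝ, l ≠ 0 → ‖(∫ θ, dilate R ψ (l - θ) • a θ) - a l‖ ≤
        C * A * (min 1 (r * |l|) / (|l| * R)) ^ n *
          (1 + R ^ 2 * l ^ 2) ^ (((n : ℝ) - j) / 2) := by
  obtain ⟨N, rfl⟩ := Nat.exists_eq_add_one.2 hj
  have hnorm := weightedL1Norm_nonneg ψ (N + 1)
  refine ⟨(N + 2) * 4 ^ (N + 1) * (weightedL1Norm ψ (N + 1) + 1) * 2 ^ (N + 1 - n),
    by positivity, fun r R A hr hR a ha l hl => ?_⟩
  have hA := ha.nonneg hr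
  have hweight : (max 1 (|l| * R) ^ (N + 1 - n))⁻¹ ≤ 2 ^ (N + 1 - n) *
      (1 + R ^ 2 * l ^ 2) ^ (((n : ℝ) - (N + 1 : ℕ)) / 2) := by
    have h := inv_max_one_pow_le (x := |l| * R) (by positivity) (N + 1 - n)
    rwa [Nat.cast_sub hn, neg_sub, mul_pow, sq_abs, mul_comm (l ^ 2)] at h
  rw [integral_dilate_smul ψ a hR]
  refine (ha.norm_integral_smul_sub_le hψ hr hR hn hl).trans ?_
  grw [hweight]
  exact le_of_eq (by ring)

end Remainder

section Cutoff

/-- The kernel `φ̌_R` of the paper. It is set up with the unnormalised exponential `e^{iuτ}`, unlike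
Mathlib's inverse Fourier transform, whose phase is `2πuτ`. -/
noncomputable def cutoffKernel (φ : ℝ → ℂ) (R u : ℝ) : ℂ :=
  (1 / (2 * Real.pi) : ℂ) * ∫ τ : ℝ, Complex.exp (Complex.I * ((u : ℂ) * (τ : ℂ))) * φ (τ / R)

theorem cutoffKernel_eq_dilate (φ : ℝ → ℂ) {R : ℝ} (hR : 0 < R) :
    cutoffKernel φ R = dilate R (dilate (2 * Real.pi)⁻¹ (𝓕⁻ φ)) := by
  ext u
  have hphase : 𝓕⁻ φ ((2 * Real.pi)⁻¹ * (R * u)) =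
      ∫ v : ℝ, Complex.exp (Complex.I * ((u : ℂ) * ((v * R : ℝ) : ℂ))) * φ (v * R / R) := by
    rw [Real.fourierInv_eq']
    congr 1 with v
    rw [mul_div_cancel_right₀ _ hR.ne', smul_eq_mul]
    congr 2
    simp only [mul_inv_rev, RCLike.inner_apply, Real.ringHom_apply, Complex.ofReal_mul,
      Complex.ofReal_ofNat, Complex.ofReal_inv]
    field_simp
  rw [cutoffKernel, dilate, dilate, hphase, Measure.integral_comp_mul_right
    (fun τ : ℝ => Complex.exp (Complex.I * ((u : ℂ) * (τ : ℂ))) * φ (τ / R)),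
    abs_of_pos (inv_pos.2 hR), Complex.real_smul]
  have hR' : (R : ℂ) ≠ 0 := Complex.ofReal_ne_zero.2 hR.ne'
  push_cast
  field_simp

theorem integrable_pow_mul_schwartzMap (f : 𝓢(ℝ, ℂ)) (k : ℕ) :
    Integrable fun x : ℝ => (x : ℂ) ^ k * f x := by
  refine (integrable_norm_iff (by fun_prop)).1 ?_
  simpa using f.integrable_pow_mul volume k

theorem iteratedDeriv_schwartzMap_zero_eq_integral_fourierInv (φ : 𝓢(ℝ, ℂ)) (k : ℕ) :
    iteratedDeriv k φ 0 =
      (-2 * Real.pi * Complex.I) ^ k * ∫ x : ℝ, (x : ℂ) ^ k * 𝓕⁻ (φ : ℝ → ℂ) x := by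
  have hintegrable : ∀ m : ℕ, Integrable fun x : ℝ => x ^ m • 𝓕⁻ (φ : ℝ → ℂ) x := fun m => by
    simpa [SchwartzMap.fourierInv_coe] using integrable_pow_mul_schwartzMap (𝓕⁻ φ) m
  have hfourier : 𝓕 (𝓕⁻ (φ : ℝ → ℂ)) = φ := by
    rw [← SchwartzMap.fourierInv_coe, ← SchwartzMap.fourier_coe,
      FourierTransform.fourier_fourierInv_eq]
  have hderiv := congrFun (Real.iteratedDeriv_fourier (f := 𝓕⁻ (φ : ℝ → ℂ)) (N := ⊤) (n := k)
    (fun m _ => hintegrable m) le_top) 0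
  rw [hfourier, Real.fourier_eq] at hderiv
  simpa [← integral_const_mul, ← mul_assoc, ← mul_pow] using hderiv

theorem isKernelOfOrder_fourierInv (φ : 𝓢(ℝ, ℂ)) {j : ℕ}
    (hφ : ∀ k < j, iteratedDeriv k φ 0 = 0 ^ k) :
    IsKernelOfOrder (𝓕⁻ (φ : ℝ → ℂ)) j := by
  constructor
  · intro k _
    simpa [SchwartzMap.fourierInv_coe] using integrable_pow_mul_schwartzMap (𝓕⁻ φ) k
  · intro k hk
    have hpi : (-2 * Real.pi * Complex.I : ℂ) ^ k ≠ 0 := by simp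
    have hmoment := (iteratedDeriv_schwartzMap_zero_eq_integral_fourierInv φ k).symm.trans (hφ k hk)
    rcases k.eq_zero_or_pos with rfl | hk0
    · simpa using hmoment
    · rw [zero_pow hk0.ne'] at hmoment ⊢
      exact (mul_eq_zero.1 hmoment).resolve_left hpi

theorem exists_schwartzMap_eq_ofReal_comp {φ : ℝ → ℝ} {ρ : ℝ} (hφ : ContDiff ℝ (⊤ : ℕ∞) φ)
    (hsupp : ∀ τ : ℝ, ρ < |τ| → φ τ = 0) : ∃ Φ : 𝓢(ℝ, ℂ), ∀ τ, Φ τ = φ τ := by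
  have hcompact : HasCompactSupport fun τ => (φ τ : ℂ) :=
    .intro (isCompact_closedBall 0 ρ) fun τ hτ => by
      rw [hsupp τ (by simpa using hτ), Complex.ofReal_zero]
  exact ⟨hcompact.toSchwartzMap (Complex.ofRealCLM.contDiff.comp hφ), fun _ => rfl⟩

theorem iteratedDeriv_zero_eq_zero_pow_of_eq_one {f : ℝ → ℂ} {ρ : ℝ} (hρ : 0 < ρ)
    (hf : ∀ τ : ℝ, |τ| ≤ ρ → f τ = 1) (k : ℕ) : iteratedDeriv k f 0 = 0 ^ k := by
  have hone : f =ᶠ[𝓝 0] fun _ => (1 : ℂ) := by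
    filter_upwards [Metric.closedBall_mem_nhds (0 : ℝ) hρ] with τ hτ
    exact hf τ (by simpa using hτ)
  rw [hone.iteratedDeriv_eq, iteratedDeriv_const, zero_pow_eq]

end Cutoff

theorem multiplier_remainder_bound_general {E : Type*} [NormedAddCommGroup E] [NormedSpace ℂ E]
    [CompleteSpace E] (φ : 𝓢(ℝ, ℂ)) {n j : ℕ} (hj : 0 < j) (hnj : n ≤ j)
    (hφ : ∀ k < j, iteratedDeriv k φ 0 = 0 ^ k) :
    ∃ C : ℝ, 0 < C ∧ ∀ r R A : ℝ, 0 < r → 0 < R → ∀ a : ℝ → E, IsTruncatedSymbol a n j r A →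
      ∀ l : ℝ, l ≠ 0 → ‖(∫ θ, cutoffKernel φ R (l - θ) • a θ) - a l‖ ≤
        C * A * (min 1 (r * |l|) / (|l| * R)) ^ n *
          (1 + R ^ 2 * l ^ 2) ^ (((n : ℝ) - j) / 2) := by
  have hkernel := (isKernelOfOrder_fourierInv φ hφ).dilate (c := (2 * Real.pi)⁻¹) (by positivity)
  obtain ⟨C, hC, hbound⟩ := hkernel.exists_norm_integral_dilate_smul_sub_le (E := E) hj hnj
  refine ⟨C, hC, fun r R A hr hR a ha l hl => ?_⟩
  rw [cutoffKernel_eq_dilate φ hR]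
  exact hbound r R A hr hR a ha l hl

/-- Bound on the remainder `a₂ = a * φ̌_R - a` in the finite-propagation-speed
decomposition of a truncated Mikhlin multiplier: if `a` is even, vanishes at `0`,
is `j := 3μ` times continuously differentiable away from `0` with
`|a^{(i)}(λ)| ≤ A |λ|^{-i} (min(1, r|λ|))^{2μ}` for `0 ≤ i ≤ j`, then
`|a₂(λ)| ≤ C A ((min(1, r|λ|))/(|λ|R))^{2μ} (1 + R²λ²)^{(2μ-j)/2}` with `C`
depending only on `μ` and `φ`. -/
theorem multiplier_remainder_bound (μ : ℕ) (hμ : 1 ≤ μ) (φ : ℝ → ℝ)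
    (hφ_smooth : ContDiff ℝ (⊤ : ℕ∞) φ)
    (hφ_range : ∀ τ, φ τ ∈ Set.Icc (0 : ℝ) 1)
    (hφ_even : ∀ τ, φ (-τ) = φ τ)
    (hφ_supp : ∀ τ : ℝ, 1 / 2 < |τ| → φ τ = 0)
    (hφ_one : ∀ τ : ℝ, |τ| ≤ 1 / 4 → φ τ = 1) :
    ∃ C : ℝ, 0 < C ∧ ∀ r R A : ℝ, 0 < r → r ≤ R → 0 < A →
      ∀ a : ℝ → ℂ, (∀ l : ℝ, a (-l) = a l) → Continuous a → a 0 = 0 →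
      ContDiffOn ℝ (3 * μ) a {(0 : ℝ)}ᶜ →
      (∀ l : ℝ, l ≠ 0 → ∀ i : ℕ, i ≤ 3 * μ →
        ‖iteratedDeriv i a l‖ ≤ A * |l| ^ (-(i : ℝ)) * (min 1 (r * |l|)) ^ (2 * μ)) →
      ∀ l : ℝ, l ≠ 0 →
        ‖(∫ θ : ℝ, a θ * ((1 / (2 * Real.pi) : ℂ) *
              ∫ τ : ℝ, Complex.exp (Complex.I * (((l - θ : ℝ) : ℂ) * (τ : ℂ))) *
                ((φ (τ / R) : ℝ) : ℂ))) - a l‖ ≤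
          C * A * ((min 1 (r * |l|)) / (|l| * R)) ^ (2 * μ) *
            (1 + R ^ 2 * l ^ 2) ^ ((2 * (μ : ℝ) - 3 * (μ : ℝ)) / 2) := by
  obtain ⟨Φ, hΦ⟩ := exists_schwartzMap_eq_ofReal_comp hφ_smooth hφ_supp
  have hjet : ∀ k, iteratedDeriv k Φ 0 = 0 ^ k :=
    iteratedDeriv_zero_eq_zero_pow_of_eq_one (ρ := 1 / 4) (by norm_num) fun τ hτ => by
      rw [hΦ, hφ_one τ hτ, Complex.ofReal_one]
  obtain ⟨C, hC, hbound⟩ := multiplier_remainder_bound_general (E := ℂ) Φ (n := 2 * μ) (j := 3 * μ)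
    (by lia) (by lia) fun k _ => hjet k
  refine ⟨C, hC, fun r R A hr hrR _ a _ _ _ hsmooth hderiv l hl => ?_⟩
  simpa [cutoffKernel, hΦ, mul_comm (a _)] using hbound r R A hr (hr.trans_le hrR) a
    (.of_norm_iteratedDeriv_le_rpow (mod_cast hsmooth) hderiv) l hl
end

section
/- Let $\mu \ge 1$ and $J \ge 0$ be integers, let $r > 0$, let $A > 0$, and let $m : (0,\infty) \to \mathbb{C}$ be $J$ times continuously differentiable with $|m^{(i)}(\lambda)| \le A\,\lambda^{-i}$ for all $\lambda > 0$ and all $0 \le i \le J$. Then the function $a(\lambda) := m(\lambda)\bigl(1 - e^{-r^2\lambda^2}\bigr)^{\mu}$ satisfies $|a^{(i)}(\lambda)| \le C A\, \lambda^{-i}\left(\min(1, r\lambda)\right)^{2\mu}$ for all $\lambda > 0$ and all $0 \le i \le J$, where $C$ depends only on $\mu$ and $J$. -/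
open MeasureTheory

/-!
Write `a = h(r ·)^μ m` with `h x = 1 - exp (-x²)`. The quantities `|x|ⁱ ‖f⁽ⁱ⁾ x‖` are invariant
under dilation of `f` and, for `i ≤ N`, submultiplicative in `f` up to a factor `2ᴺ` by the Leibniz
rule, so it suffices to bound `|x|ⁱ |h⁽ⁱ⁾ x|` by a multiple of `min (1, |x|)²`. Boundedness for
large `x` is the decay of the Gaussian; near `0` the factor `|x|ⁱ` already supplies `x²` when
`i ≥ 2`, and `h` vanishes to second order, which settles `i = 0` and `i = 1`.
-/

open Filter Finset Polynomial Topology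

lemma iteratedDeriv_smul_eq_sum {𝕜 E 𝔸 : Type*} [NontriviallyNormedField 𝕜]
    [NormedAddCommGroup E] [NormedSpace 𝕜 E] [NormedRing 𝔸] [NormedAlgebra 𝕜 𝔸]
    [Module 𝔸 E] [IsBoundedSMul 𝔸 E] [IsScalarTower 𝕜 𝔸 E] {n : ℕ} {x : 𝕜} {f : 𝕜 → 𝔸} {g : 𝕜 → E}
    (hf : ContDiffAt 𝕜 n f x) (hg : ContDiffAt 𝕜 n g x) :
    iteratedDeriv n (fun y ↦ f y • g y) x = ∑ k ∈ range (n + 1),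
      n.choose k • iteratedDeriv k f x • iteratedDeriv (n - k) g x := by
  simp only [← iteratedDerivWithin_univ]
  exact iteratedDerivWithin_smul (Set.mem_univ x) uniqueDiffOn_univ
    hf.contDiffWithinAt hg.contDiffWithinAt

/-- The Mikhlin condition of order `N` with constant `B` at the single point `x`. It is written in
the scale-invariant product form `|x|ⁱ ‖f⁽ⁱ⁾ x‖ ≤ B`, which stays meaningful at `x = 0`. -/
structure MikhlinBoundAt {E : Type*} [NormedAddCommGroup E] [NormedSpace ℝ E]
    (N : ℕ) (B : ℝ) (f : ℝ → E) (x : ℝ) : Prop where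
  contDiffAt : ContDiffAt ℝ N f x
  abs_pow_mul_norm_le : ∀ i ≤ N, |x| ^ i * ‖iteratedDeriv i f x‖ ≤ B

namespace MikhlinBoundAt

variable {E : Type*} [NormedAddCommGroup E] [NormedSpace ℝ E]
  {𝔸 : Type*} [NormedRing 𝔸] [NormedAlgebra ℝ 𝔸]
  {N : ℕ} {A B x : ℝ} {f : ℝ → 𝔸} {g : ℝ → E}

lemma nonneg (hg : MikhlinBoundAt N B g x) : 0 ≤ B :=
  (by positivity : (0 : ℝ) ≤ _).trans (hg.abs_pow_mul_norm_le 0 N.zero_le)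

lemma mono (hg : MikhlinBoundAt N A g x) (hAB : A ≤ B) : MikhlinBoundAt N B g x :=
  ⟨hg.contDiffAt, fun i hi ↦ (hg.abs_pow_mul_norm_le i hi).trans hAB⟩

lemma iff_norm_le_rpow (hx : 0 < x) :
    MikhlinBoundAt N B g x ↔
      ContDiffAt ℝ N g x ∧ ∀ i ≤ N, ‖iteratedDeriv i g x‖ ≤ B * x ^ (-(i : ℝ)) := by
  have bound_iff (i : ℕ) : |x| ^ i * ‖iteratedDeriv i g x‖ ≤ B ↔
      ‖iteratedDeriv i g x‖ ≤ B * x ^ (-(i : ℝ)) := by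
    rw [abs_of_pos hx, Real.rpow_neg hx.le, Real.rpow_natCast, ← div_eq_mul_inv,
      le_div_iff₀' (pow_pos hx i)]
  simp only [← bound_iff]
  exact ⟨fun h ↦ ⟨h.1, h.2⟩, fun h ↦ ⟨h.1, h.2⟩⟩

lemma one [NormOneClass 𝔸] : MikhlinBoundAt N 1 (fun _ ↦ (1 : 𝔸)) x := by
  refine ⟨contDiffAt_const, fun i _ ↦ ?_⟩
  rw [iteratedDeriv_const]
  split_ifs with hi <;> simp [hi]

lemma comp_const_mul (hg : ContDiff ℝ N g) {r : ℝ} (h : MikhlinBoundAt N B g (r * x)) :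
    MikhlinBoundAt N B (fun y ↦ g (r * y)) x := by
  refine ⟨by fun_prop, fun i hi ↦ ?_⟩
  rw [iteratedDeriv_comp_const_smul (hg.of_le (mod_cast hi))]
  calc |x| ^ i * ‖r ^ i • iteratedDeriv i g (r * x)‖
      = |r * x| ^ i * ‖iteratedDeriv i g (r * x)‖ := by
        rw [norm_smul, norm_pow, Real.norm_eq_abs, abs_mul]; ring
    _ ≤ B := h.abs_pow_mul_norm_le i hi

lemma smul [Module 𝔸 E] [IsBoundedSMul 𝔸 E] [IsScalarTower ℝ 𝔸 E]
    (hf : MikhlinBoundAt N A f x) (hg : MikhlinBoundAt N B g x) :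
    MikhlinBoundAt N (2 ^ N * A * B) (fun y ↦ f y • g y) x := by
  refine ⟨hf.contDiffAt.smul hg.contDiffAt, fun i hi ↦ ?_⟩
  have hA := hf.nonneg
  have hB := hg.nonneg
  have term_le (k : ℕ) (hk : k ∈ range (i + 1)) :
      |x| ^ i * ‖i.choose k • iteratedDeriv k f x • iteratedDeriv (i - k) g x‖ ≤
        i.choose k * (A * B) := by
    have hki : k ≤ i := mem_range_succ_iff.mp hk
    calc |x| ^ i * ‖i.choose k • iteratedDeriv k f x • iteratedDeriv (i - k) g x‖
        ≤ |x| ^ i * (i.choose k * (‖iteratedDeriv k f x‖ * ‖iteratedDeriv (i - k) g x‖)) := by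
          gcongr
          exact norm_nsmul_le.trans (by gcongr; exact norm_smul_le _ _)
      _ = i.choose k * ((|x| ^ k * ‖iteratedDeriv k f x‖) *
            (|x| ^ (i - k) * ‖iteratedDeriv (i - k) g x‖)) := by
          rw [← pow_mul_pow_sub |x| hki]; ring
      _ ≤ i.choose k * (A * B) := by
          gcongr
          · exact hf.abs_pow_mul_norm_le k (hki.trans hi)
          · exact hg.abs_pow_mul_norm_le (i - k) ((i.sub_le k).trans hi)
  calc |x| ^ i * ‖iteratedDeriv i (fun y ↦ f y • g y) x‖
      ≤ ∑ k ∈ range (i + 1),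
          |x| ^ i * ‖i.choose k • iteratedDeriv k f x • iteratedDeriv (i - k) g x‖ := by
        rw [iteratedDeriv_smul_eq_sum (hf.contDiffAt.of_le (mod_cast hi))
          (hg.contDiffAt.of_le (mod_cast hi)), ← mul_sum]
        gcongr
        exact norm_sum_le _ _
    _ ≤ ∑ k ∈ range (i + 1), i.choose k * (A * B) := sum_le_sum term_le
    _ = 2 ^ i * (A * B) := by
        rw [← sum_mul]
        exact_mod_cast congrArg (fun n : ℕ ↦ (n : ℝ) * (A * B)) (Nat.sum_range_choose i)
    _ ≤ 2 ^ N * (A * B) := by gcongr; norm_num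
    _ = 2 ^ N * A * B := by ring

lemma pow [NormOneClass 𝔸] (hf : MikhlinBoundAt N A f x) (n : ℕ) :
    MikhlinBoundAt N ((2 ^ N * A) ^ n) (fun y ↦ f y ^ n) x := by
  induction n with
  | zero => simpa only [pow_zero] using one
  | succ n ih => simpa only [pow_succ', smul_eq_mul] using hf.smul ih

end MikhlinBoundAt

lemma tendsto_eval_mul_exp_neg_mul_sq_cocompact (P : ℝ[X]) {b : ℝ} (hb : 0 < b) :
    Tendsto (fun x ↦ P.eval x * Real.exp (-b * x ^ 2)) (cocompact ℝ) (𝓝 0) := by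
  induction P using Polynomial.induction_on' with
  | add P Q hP hQ => simpa only [eval_add, add_mul, add_zero] using hP.add hQ
  | monomial n a =>
    have habs := (tendsto_rpow_abs_mul_exp_neg_mul_sq_cocompact hb n).const_mul |a|
    rw [mul_zero] at habs
    refine squeeze_zero_norm (fun x ↦ le_of_eq ?_) habs
    simp only [eval_monomial, norm_mul, norm_pow, Real.norm_eq_abs, Real.abs_exp,
      Real.rpow_natCast, mul_assoc]

lemma exists_abs_eval_mul_exp_neg_mul_sq_le (P : ℝ[X]) {b : ℝ} (hb : 0 < b) :
    ∃ B, ∀ x, |P.eval x| * Real.exp (-b * x ^ 2) ≤ B := by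
  let φ : ZeroAtInftyContinuousMap ℝ ℝ :=
    ⟨⟨fun x ↦ P.eval x * Real.exp (-b * x ^ 2), by fun_prop⟩,
      tendsto_eval_mul_exp_neg_mul_sq_cocompact P hb⟩
  obtain ⟨B, hB⟩ := φ.isBounded_range.exists_norm_le
  refine ⟨B, fun x ↦ ?_⟩
  calc |P.eval x| * Real.exp (-b * x ^ 2) = ‖φ x‖ := by
        simp only [φ, ZeroAtInftyContinuousMap.coe_mk, norm_mul, Real.norm_eq_abs, Real.abs_exp]
    _ ≤ B := hB (φ x) ⟨x, rfl⟩

lemma exists_abs_pow_mul_iteratedDeriv_gaussian_le (k n : ℕ) :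
    ∃ B, ∀ x : ℝ, |x| ^ k * |iteratedDeriv n (fun y ↦ Real.exp (-(y ^ 2 / 2))) x| ≤ B := by
  obtain ⟨B, hB⟩ := exists_abs_eval_mul_exp_neg_mul_sq_le
    (X ^ k * (hermite n).map (algebraMap ℤ ℝ)) (one_half_pos (α := ℝ))
  refine ⟨B, fun x ↦ (le_of_eq ?_).trans (hB x)⟩
  rw [iteratedDeriv_eq_iterate, deriv_gaussian_eq_hermite_mul_gaussian, eval_mul, eval_pow, eval_X,
    eval_map_algebraMap, abs_mul, abs_mul, abs_mul, abs_pow, abs_pow, abs_neg, abs_one, one_pow,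
    one_mul, Real.abs_exp, mul_assoc, show -(x ^ 2 / 2) = -(1 / 2) * x ^ 2 by ring]

lemma iteratedDeriv_one_sub_gaussian {n : ℕ} (hn : 0 < n) (x : ℝ) :
    iteratedDeriv n (fun y ↦ 1 - Real.exp (-(y ^ 2 / 2))) x =
      -iteratedDeriv n (fun y ↦ Real.exp (-(y ^ 2 / 2))) x := by
  rw [iteratedDeriv_const_sub hn, iteratedDeriv_neg]

lemma exp_neg_sq_div_two_le_one (x : ℝ) : Real.exp (-(x ^ 2 / 2)) ≤ 1 :=
  Real.exp_le_one_iff.mpr (neg_nonpos.mpr (by positivity))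

lemma abs_one_sub_gaussian (x : ℝ) :
    |1 - Real.exp (-(x ^ 2 / 2))| = 1 - Real.exp (-(x ^ 2 / 2)) :=
  abs_of_nonneg (sub_nonneg.mpr (exp_neg_sq_div_two_le_one x))

lemma exists_abs_pow_mul_iteratedDeriv_one_sub_gaussian_le (n : ℕ) :
    ∃ B, ∀ x : ℝ, |x| ^ n * |iteratedDeriv n (fun y ↦ 1 - Real.exp (-(y ^ 2 / 2))) x| ≤ B := by
  rcases n.eq_zero_or_pos with rfl | hn
  · refine ⟨1, fun x ↦ ?_⟩
    rw [pow_zero, one_mul, iteratedDeriv_zero, abs_one_sub_gaussian]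
    exact sub_le_self 1 (Real.exp_pos _).le
  · simpa only [iteratedDeriv_one_sub_gaussian hn, abs_neg] using
      exists_abs_pow_mul_iteratedDeriv_gaussian_le n n

lemma exists_abs_pow_mul_iteratedDeriv_one_sub_gaussian_le_mul_sq (n : ℕ) :
    ∃ B, ∀ x : ℝ,
      |x| ^ n * |iteratedDeriv n (fun y ↦ 1 - Real.exp (-(y ^ 2 / 2))) x| ≤ B * |x| ^ 2 := by
  rcases n with _ | _ | n
  · refine ⟨1 / 2, fun x ↦ ?_⟩
    rw [pow_zero, one_mul, iteratedDeriv_zero, abs_one_sub_gaussian, sq_abs]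
    linarith [Real.one_sub_le_exp_neg (x ^ 2 / 2)]
  · refine ⟨1, fun x ↦ ?_⟩
    have hderiv : iteratedDeriv 1 (fun y ↦ Real.exp (-(y ^ 2 / 2))) x =
        -x * Real.exp (-(x ^ 2 / 2)) := by
      simpa [iteratedDeriv_eq_iterate] using deriv_gaussian_eq_hermite_mul_gaussian 1 x
    calc |x| ^ 1 * |iteratedDeriv 1 (fun y ↦ 1 - Real.exp (-(y ^ 2 / 2))) x|
        = |x| ^ 2 * Real.exp (-(x ^ 2 / 2)) := by
          rw [iteratedDeriv_one_sub_gaussian one_pos, hderiv, abs_neg, abs_mul, abs_neg,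
            Real.abs_exp]
          ring
      _ ≤ |x| ^ 2 * 1 := by gcongr; exact exp_neg_sq_div_two_le_one x
      _ = 1 * |x| ^ 2 := mul_comm _ _
  · obtain ⟨B, hB⟩ := exists_abs_pow_mul_iteratedDeriv_gaussian_le n (n + 2)
    refine ⟨B, fun x ↦ ?_⟩
    rw [iteratedDeriv_one_sub_gaussian (by positivity), abs_neg, add_assoc, pow_add,
      mul_right_comm]
    exact mul_le_mul_of_nonneg_right (hB x) (sq_nonneg |x|)

lemma le_max_mul_min_one_pow {y B D t : ℝ} (n : ℕ) (hB : y ≤ B) (hD : y ≤ D * t ^ n)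
    (ht : 0 ≤ t) : y ≤ max B D * min 1 t ^ n := by
  rcases le_total 1 t with h | h
  · simpa only [min_eq_left h, one_pow, mul_one] using hB.trans (le_max_left B D)
  · rw [min_eq_right h]
    exact hD.trans (by gcongr; exact le_max_right B D)

lemma exists_mikhlinBoundAt_one_sub_gaussian (N : ℕ) :
    ∃ B, 0 < B ∧ ∀ x,
      MikhlinBoundAt N (B * min 1 |x| ^ 2) (fun y ↦ 1 - Real.exp (-(y ^ 2 / 2))) x := by
  choose B hB using exists_abs_pow_mul_iteratedDeriv_one_sub_gaussian_le
  choose D hD using exists_abs_pow_mul_iteratedDeriv_one_sub_gaussian_le_mul_sq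
  let K (i : ℕ) := max (B i) (D i)
  obtain ⟨M, hM⟩ := ((Set.finite_Iic N).image K).bddAbove
  refine ⟨max M 1, by positivity, fun x ↦ ⟨by fun_prop, fun i hi ↦ ?_⟩⟩
  calc |x| ^ i * ‖iteratedDeriv i (fun y ↦ 1 - Real.exp (-(y ^ 2 / 2))) x‖
      ≤ K i * min 1 |x| ^ 2 :=
        le_max_mul_min_one_pow 2 (hB i x) (hD i x) (abs_nonneg x)
    _ ≤ max M 1 * min 1 |x| ^ 2 := by
        gcongr
        exact le_max_of_le_left (hM (Set.mem_image_of_mem _ hi))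

lemma min_one_mul_le {c t : ℝ} (hc : 1 ≤ c) : min 1 (c * t) ≤ c * min 1 t := by
  rw [mul_min_of_nonneg _ _ (zero_le_one.trans hc), mul_one]
  exact min_le_min_right _ hc

lemma exists_mikhlinBoundAt_one_sub_exp_neg_sq_mul_sq (N : ℕ) :
    ∃ B, 0 < B ∧ ∀ r x : ℝ,
      MikhlinBoundAt N (B * min 1 |r * x| ^ 2) (fun y ↦ 1 - Real.exp (-(r ^ 2 * y ^ 2))) x := by
  obtain ⟨B, hB, hbound⟩ := exists_mikhlinBoundAt_one_sub_gaussian N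
  refine ⟨B * √2 ^ 2, by positivity, fun r x ↦ ?_⟩
  -- The dilation by `√2` undoes the normalisation `y ^ 2 / 2` of the Hermite polynomials.
  have hdilate := (hbound (√2 * r * x)).comp_const_mul (by fun_prop)
  have hprofile (y : ℝ) : (√2 * r * y) ^ 2 / 2 = r ^ 2 * y ^ 2 := by
    rw [mul_pow, mul_pow, Real.sq_sqrt zero_le_two]; ring
  simp only [hprofile] at hdilate
  refine hdilate.mono ?_
  rw [mul_assoc √2, abs_mul, abs_of_nonneg (Real.sqrt_nonneg 2), mul_assoc, ← mul_pow]
  gcongr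
  exact min_one_mul_le (Real.one_le_sqrt.mpr one_le_two)

theorem truncated_multiplier_derivative_bounds_general (μ J : ℕ) :
    ∃ C : ℝ, 0 < C ∧ ∀ {E : Type*} [NormedAddCommGroup E] [NormedSpace ℝ E]
      (r A x : ℝ) (m : ℝ → E), MikhlinBoundAt J A m x →
        MikhlinBoundAt J (C * A * min 1 |r * x| ^ (2 * μ))
          (fun y ↦ (1 - Real.exp (-(r ^ 2 * y ^ 2))) ^ μ • m y) x := by
  obtain ⟨B, hB, hbound⟩ := exists_mikhlinBoundAt_one_sub_exp_neg_sq_mul_sq J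
  refine ⟨2 ^ J * (2 ^ J * B) ^ μ, by positivity, fun r A x m hm ↦ ?_⟩
  refine (((hbound r x).pow μ).smul hm).mono (le_of_eq ?_)
  rw [pow_mul, ← mul_assoc, mul_pow (2 ^ J * B)]
  ring

/-- Multiplying a Mikhlin multiplier `m` by `(1 - e^{-r²λ²})^μ` produces `2μ` orders
of vanishing at `λ = 0` at scale `r^{-1}`: if `|m^{(i)}(λ)| ≤ A λ^{-i}` for `λ > 0`
and `0 ≤ i ≤ J`, then `a(λ) = m(λ)(1 - e^{-r²λ²})^μ` satisfies
`|a^{(i)}(λ)| ≤ C A λ^{-i} (min(1, rλ))^{2μ}` for `λ > 0`, `0 ≤ i ≤ J`, with `C`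
depending only on `μ` and `J`. -/
theorem truncated_multiplier_derivative_bounds (μ J : ℕ) (hμ : 1 ≤ μ) :
    ∃ C : ℝ, 0 < C ∧ ∀ r A : ℝ, 0 < r → 0 < A → ∀ m : ℝ → ℂ,
      ContDiffOn ℝ J m (Set.Ioi (0 : ℝ)) →
      (∀ l : ℝ, 0 < l → ∀ i : ℕ, i ≤ J →
        ‖iteratedDeriv i m l‖ ≤ A * l ^ (-(i : ℝ))) →
      ∀ l : ℝ, 0 < l → ∀ i : ℕ, i ≤ J →
        ‖iteratedDeriv i
            (fun x : ℝ => m x * (((1 - Real.exp (-(r ^ 2 * x ^ 2))) ^ μ : ℝ) : ℂ)) l‖ ≤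
          C * A * l ^ (-(i : ℝ)) * (min 1 (r * l)) ^ (2 * μ) := by
  obtain ⟨C, hC, hbound⟩ := truncated_multiplier_derivative_bounds_general μ J
  refine ⟨C, hC, fun r A hr _ m hm hmA l hl i hi ↦ ?_⟩
  have hm_bound : MikhlinBoundAt J A m l :=
    (MikhlinBoundAt.iff_norm_le_rpow hl).mpr ⟨hm.contDiffAt (Ioi_mem_nhds hl), hmA l hl⟩
  have ha_bound := ((MikhlinBoundAt.iff_norm_le_rpow hl).mp (hbound r A l m hm_bound)).2 i hi
  rw [abs_of_pos (mul_pos hr hl), mul_right_comm] at ha_bound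
  simpa only [Complex.real_smul, mul_comm (m _)] using ha_bound
end
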